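/- arXiv:2601.03128 — 6 statements merged into one kernel-verified Lean document; each statement's English description precedes it below -/
import Mathlib

section
/- Let C be a braided multiring category over a field k and let M be a left C-module category. For any nonzero object X of C, the full subcategory Ann_M(X) := {M ∈ M | X ⊗ M ≅ 0} is a Serre submodule category of M; that is, it is a Serre subcategory of M and Y ⊗ N ∈ Ann_M(X) for every Y ∈ C and N ∈ Ann_M(X). -/
/-!
STATEMENT 2: Let `C` be a braided multiring category over a field `k` and `M` a left
`C`-module category. For any nonzero object `X` of `C`, the full subcategory
`Ann_M(X) = {m ∈ M | X ⊗ m ≅ 0}` is a Serre submodule category of `M`: it is a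
Serre subcategory of `M` and is closed under the action of `C`.
-/

open CategoryTheory Category Limits MonoidalCategory

namespace DerivedModule

/-- A left module category structure on `M` over a monoidal category `C`:
a module product bifunctor together with coherent associativity and unit
isomorphisms (pentagon and triangle axioms). -/
structure ModuleStruct (C : Type*) [Category C] [MonoidalCategory C]
    (M : Type*) [Category M] where
  /-- the module product bifunctor `⊗ : C × M → M` -/
  act : C ⥤ M ⥤ M
  /-- the associativity isomorphism `(X ⊗ Y) ⊗ m ≅ X ⊗ (Y ⊗ m)` -/
  assocIso (X Y : C) : act.obj (X ⊗ Y) ≅ act.obj Y ⋙ act.obj X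
  /-- the unit isomorphism `𝟙 ⊗ m ≅ m` -/
  unitIso : act.obj (𝟙_ C) ≅ 𝟭 M
  assoc_natural : ∀ {X X' Y Y' : C} (f : X ⟶ X') (g : Y ⟶ Y') (m : M),
    (act.map (f ⊗ₘ g)).app m ≫ (assocIso X' Y').hom.app m =
      (assocIso X Y).hom.app m ≫ (act.map f).app ((act.obj Y).obj m) ≫
        (act.obj X').map ((act.map g).app m)
  pentagon : ∀ (X Y Z : C) (m : M),
    (act.map (α_ X Y Z).hom).app m ≫ (assocIso X (Y ⊗ Z)).hom.app m ≫
        (act.obj X).map ((assocIso Y Z).hom.app m) =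
      (assocIso (X ⊗ Y) Z).hom.app m ≫ (assocIso X Y).hom.app ((act.obj Z).obj m)
  triangle : ∀ (X : C) (m : M),
    (act.map (ρ_ X).hom).app m =
      (assocIso X (𝟙_ C)).hom.app m ≫ (act.obj X).map (unitIso.hom.app m)

/-- A module category over a multiring category: the module product bifunctor is,
in addition, `k`-bilinear on morphisms and exact in each variable. -/
structure AbelianModuleStruct (k : Type*) [Field k] (C : Type*) [Category C] [Abelian C]
    [Linear k C] [MonoidalCategory C]
    (M : Type*) [Category M] [Abelian M] [Linear k M] extends ModuleStruct C M where
  additive_obj (X : C) : (act.obj X).Additive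
  linear_obj (X : C) : (act.obj X).Linear k
  additive_flip (m : M) : (act.flip.obj m).Additive
  linear_flip (m : M) : (act.flip.obj m).Linear k
  exact_limits_obj (X : C) : PreservesFiniteLimits (act.obj X)
  exact_colimits_obj (X : C) : PreservesFiniteColimits (act.obj X)
  exact_limits_flip (m : M) : PreservesFiniteLimits (act.flip.obj m)
  exact_colimits_flip (m : M) : PreservesFiniteColimits (act.flip.obj m)

/-- A Serre subcategory of an abelian category, given as a predicate on objects:
a full (isomorphism-closed) subcategory closed under subobjects, quotients and
extensions. -/
structure IsSerreSubcategory {A : Type*} [Category A] [Abelian A] (P : A → Prop) : Prop where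
  of_iso : ∀ {X Y : A}, (X ≅ Y) → P X → P Y
  of_mono : ∀ {X Y : A} (f : X ⟶ Y), Mono f → P Y → P X
  of_epi : ∀ {X Y : A} (f : X ⟶ Y), Epi f → P X → P Y
  of_shortExact : ∀ (S : ShortComplex A), S.ShortExact → P S.X₁ → P S.X₃ → P S.X₂

end DerivedModule

open DerivedModule

/-- Over a braided multiring category `C`, the annihilator
`Ann_M(X)` of a nonzero object `X ∈ C` in a left `C`-module category `M` is a Serre
submodule category of `M`. -/
theorem annihilator_in_module_isSerreSubmodule
    (k : Type*) [Field k]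
    (C : Type*) [Category C] [Abelian C] [Linear k C] [MonoidalCategory C]
    [BraidedCategory C]
    [MonoidalPreadditive C] [MonoidalLinear k C]
    [∀ X : C, PreservesFiniteLimits (tensorLeft X)]
    [∀ X : C, PreservesFiniteColimits (tensorLeft X)]
    [∀ X : C, PreservesFiniteLimits (tensorRight X)]
    [∀ X : C, PreservesFiniteColimits (tensorRight X)]
    (M : Type*) [Category M] [Abelian M] [Linear k M]
    (mod : AbelianModuleStruct k C M)
    (X : C) (hX : ¬ Limits.IsZero X) :
    IsSerreSubcategory (fun m : M => Limits.IsZero ((mod.act.obj X).obj m)) ∧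
      (∀ (Y : C) (m : M), Limits.IsZero ((mod.act.obj X).obj m) →
        Limits.IsZero ((mod.act.obj X).obj ((mod.act.obj Y).obj m))) := by
  have := mod.additive_obj X
  have := mod.exact_limits_obj X
  have := mod.exact_colimits_obj X
  have hzero : ∀ (Y : C) {m : M}, Limits.IsZero m → Limits.IsZero ((mod.act.obj Y).obj m) := by
    intro Y m h
    have := mod.additive_obj Y
    exact (mod.act.obj Y).map_isZero h
  refine ⟨⟨?_, ?_, ?_, ?_⟩, ?_⟩
  · intro A B e h
    exact h.of_iso ((mod.act.obj X).mapIso e.symm)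
  · intro A B f hf h
    exact Limits.IsZero.of_mono ((mod.act.obj X).map f) h
  · intro A B f hf h
    exact Limits.IsZero.of_epi ((mod.act.obj X).map f) h
  · intro S hS h1 h3
    exact (hS.map_of_exact (mod.act.obj X)).exact.isZero_of_both_zeros
      (h1.eq_of_src _ _) (h3.eq_of_tgt _ _)
  · intro Y m h
    exact (hzero Y h).of_iso (((mod.assocIso X Y).app m).symm ≪≫
      (mod.act.mapIso (β_ X Y)).app m ≪≫ (mod.assocIso Y X).app m)
end

section
/- Let T be a monoidal triangulated category, K a left triangulated module category over T, J a two-sided thick ideal of T, and L a thick T-submodule category of K. If J ⊗ M ∈ L for all J ∈ J and M ∈ K, then the Verdier quotient K/L carries the structure of a left triangulated module category over the Verdier quotient T/J. -/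
/-!
STATEMENT 8: Let `T` be a monoidal triangulated category, `K` a left triangulated
module category over `T`, `J` a two-sided thick ideal of `T`, and `L` a thick
`T`-submodule category of `K`. If `J ⊗ M ∈ L` for all `J ∈ J` and `M ∈ K`, then the
Verdier quotient `K/L` carries the structure of a left triangulated module category
over the Verdier quotient `T/J`.

The Verdier quotients are encoded as localizations with respect to the class of
morphisms whose cone lies in the corresponding thick subcategory (`thickW`); the
resulting module structure is compatible with the quotient functors.
-/

open CategoryTheory Category Limits Pretriangulated MonoidalCategory ZeroObject
open CategoryTheory.Triangulated

namespace DerivedModule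

section Triangulated

variable (T : Type*) [Category T] [HasZeroObject T] [Preadditive T] [HasShift T ℤ]
  [∀ n : ℤ, (shiftFunctor T n).Additive] [Pretriangulated T]

/-- A monoidal triangulated category: a pretriangulated category with a monoidal
structure whose tensor product is a triangulated functor in each variable. -/
class MonoidalTriangulated [MonoidalCategory T] where
  additiveLeft (X : T) : (tensorLeft X).Additive
  additiveRight (X : T) : (tensorRight X).Additive
  commShiftLeft (X : T) : (tensorLeft X).CommShift ℤ
  commShiftRight (X : T) : (tensorRight X).CommShift ℤ
  triangulatedLeft (X : T) : letI := commShiftLeft X; (tensorLeft X).IsTriangulated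
  triangulatedRight (X : T) : letI := commShiftRight X; (tensorRight X).IsTriangulated

variable (K : Type*) [Category K] [HasZeroObject K] [Preadditive K] [HasShift K ℤ]
  [∀ n : ℤ, (shiftFunctor K n).Additive] [Pretriangulated K]

/-- A left triangulated module category structure on a pretriangulated category `K`
over a monoidal triangulated category `T`: a `T`-module structure whose module
product bifunctor is a triangulated functor in each variable. -/
structure TriangulatedModuleStruct [MonoidalCategory T] extends ModuleStruct T K where
  additive_obj (X : T) : (act.obj X).Additive
  commShift_obj (X : T) : (act.obj X).CommShift ℤ
  triangulated_obj (X : T) : letI := commShift_obj X; (act.obj X).IsTriangulated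
  additive_flip (m : K) : (act.flip.obj m).Additive
  commShift_flip (m : K) : (act.flip.obj m).CommShift ℤ
  triangulated_flip (m : K) : letI := commShift_flip m; (act.flip.obj m).IsTriangulated

variable {K}

/-- A thick subcategory of a pretriangulated category, as a predicate on objects:
a triangulated subcategory closed under direct summands. -/
structure IsThickSubcategory [HasBinaryBiproducts K] (P : K → Prop) : Prop where
  zero : P 0
  of_iso : ∀ {X Y : K}, (X ≅ Y) → P X → P Y
  shift : ∀ (X : K) (n : ℤ), P X → P (X⟦n⟧)
  ext₂ : ∀ (Tr : Triangle K), (Tr ∈ distTriang K) → P Tr.obj₁ → P Tr.obj₃ → P Tr.obj₂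
  of_summand : ∀ (X Y : K), P (X ⊞ Y) → P X

/-- The class of morphisms whose cone lies in the given subcategory; inverting them
yields the Verdier quotient. -/
def thickW (P : K → Prop) : MorphismProperty K :=
  fun X Y f => ∃ (Z : K) (g : Y ⟶ Z) (h : Z ⟶ X⟦(1 : ℤ)⟧),
    (Triangle.mk f g h ∈ distTriang K) ∧ P Z

end Triangulated

end DerivedModule

namespace DerivedModule

section LocTri

set_option linter.unusedSectionVars false

variable {C : Type*} [Category C] [HasZeroObject C] [Preadditive C] [HasShift C ℤ]
  [∀ n : ℤ, (shiftFunctor C n).Additive] [Pretriangulated C] [HasBinaryBiproducts C]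
  {P : C → Prop}

lemma thickW_containsIdentities (hP : IsThickSubcategory P) :
    (thickW P).ContainsIdentities where
  id_mem X := ⟨0, 0, 0, contractible_distinguished X, hP.zero⟩

lemma thickW_ore {X Y X' : C} (s : X ⟶ Y) (hs : thickW P s) (f : X ⟶ X') :
    ∃ (Y' : C) (s' : X' ⟶ Y') (f' : Y ⟶ Y'), thickW P s' ∧ s ≫ f' = f ≫ s' := by
  obtain ⟨Z, g, h, H, mem⟩ := hs
  obtain ⟨Y', s', f', mem'⟩ := distinguished_cocone_triangle₂ (h ≫ f⟦1⟧')
  obtain ⟨b, ⟨hb₁, _⟩⟩ :=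
    complete_distinguished_triangle_morphism₂ _ _ H mem' f (𝟙 Z) (Category.id_comp _).symm
  exact ⟨Y', s', b, ⟨_, _, _, mem', mem⟩, hb₁⟩

lemma thickW_cancel (hP : IsThickSubcategory P) {X' X Y : C} (f₁ f₂ : X ⟶ Y) (s : X' ⟶ X)
    (hs : thickW P s) (h : s ≫ f₁ = s ≫ f₂) :
    ∃ (Y' : C) (t : Y ⟶ Y'), thickW P t ∧ f₁ ≫ t = f₂ ≫ t := by
  obtain ⟨Z, g, h', H, mem⟩ := hs
  have hf₂ : s ≫ (f₁ - f₂) = 0 := by rw [Preadditive.comp_sub, h, sub_self]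
  obtain ⟨q, hq⟩ : ∃ q : Z ⟶ Y, f₁ - f₂ = g ≫ q := Triangle.yoneda_exact₂ _ H _ hf₂
  obtain ⟨Y', r, t, mem'⟩ := distinguished_cocone_triangle q
  refine ⟨Y', r, ⟨_, _, _, rot_of_distTriang _ mem', hP.shift _ _ mem⟩, ?_⟩
  have eq : q ≫ r = 0 := comp_distTriang_mor_zero₁₂ _ mem'
  rw [← sub_eq_zero, ← Preadditive.sub_comp, hq, assoc, eq, comp_zero]

lemma mulClosure_ore {X Y : C} (s : X ⟶ Y)
    (hs : (thickW P).multiplicativeClosure s) : ∀ {X' : C} (f : X ⟶ X'),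
    ∃ (Y' : C) (s' : X' ⟶ Y') (f' : Y ⟶ Y'),
      (thickW P).multiplicativeClosure s' ∧ s ≫ f' = f ≫ s' := by
  induction hs with
  | of s hs =>
    intro X' f
    obtain ⟨Y', s', f', h, w⟩ := thickW_ore s hs f
    exact ⟨Y', s', f', .of _ h, w⟩
  | id x =>
    intro X' f
    exact ⟨X', 𝟙 _, f, .id _, by simp⟩
  | comp_of s t hs ht ih =>
    intro X' f
    obtain ⟨Y', s', f', h, w⟩ := ih f
    obtain ⟨Y'', s'', f'', h', w'⟩ := thickW_ore t ht f'
    exact ⟨Y'', s' ≫ s'', f'', .comp_of _ _ h h', by rw [assoc, w', reassoc_of% w]⟩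

lemma mulClosure_cancel (hP : IsThickSubcategory P) {X' X : C} (s : X' ⟶ X)
    (hs : (thickW P).multiplicativeClosure s) : ∀ {Y : C} (f₁ f₂ : X ⟶ Y)
    (_ : s ≫ f₁ = s ≫ f₂),
    ∃ (Y' : C) (t : Y ⟶ Y'), (thickW P).multiplicativeClosure t ∧ f₁ ≫ t = f₂ ≫ t := by
  induction hs with
  | of s hs =>
    intro Y f₁ f₂ h
    obtain ⟨Y', t, ht, w⟩ := thickW_cancel hP f₁ f₂ s hs h
    exact ⟨Y', t, .of _ ht, w⟩
  | id x =>
    intro Y f₁ f₂ h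
    exact ⟨Y, 𝟙 _, .id _, by simpa using h⟩
  | comp_of s t hs ht ih =>
    intro Y f₁ f₂ h
    obtain ⟨Y', u, hu, w⟩ := ih (t ≫ f₁) (t ≫ f₂) (by simpa using h)
    obtain ⟨Y'', v, hv, w'⟩ := thickW_cancel hP (f₁ ≫ u) (f₂ ≫ u) t ht (by simpa using w)
    exact ⟨Y'', u ≫ v, .comp_of _ _ hu hv, by simpa using w'⟩

lemma mulClosure_calculus (hP : IsThickSubcategory P) :
    (thickW P).multiplicativeClosure.HasLeftCalculusOfFractions where
  exists_leftFraction X Y φ := by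
    obtain ⟨Y', s', f', h, w⟩ := mulClosure_ore φ.s φ.hs φ.f
    exact ⟨MorphismProperty.LeftFraction.mk f' s' h, w.symm⟩
  ext X' X Y f₁ f₂ s hs h := by
    obtain ⟨Y', t, ht, w⟩ := mulClosure_cancel hP s hs f₁ f₂ h
    exact ⟨Y', t, ht, w⟩

variable {D : Type*} [Category D]

lemma essSurj_mapArrow_of_thickW (hP : IsThickSubcategory P) (Q : C ⥤ D)
    [Q.IsLocalization (thickW P)] : Q.mapArrow.EssSurj := by
  have hinv : (thickW P).multiplicativeClosure.IsInvertedBy Q := by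
    intro X Y f hf
    have : (thickW P).multiplicativeClosure ≤
        (MorphismProperty.isomorphisms D).inverseImage Q := by
      rw [MorphismProperty.multiplicativeClosure_le_iff]
      exact Localization.inverts Q (thickW P)
    exact this f hf
  have : Q.IsLocalization (thickW P).multiplicativeClosure := by
    have : (𝟭 D).IsLocalization (⊥ : MorphismProperty D) :=
      Functor.IsLocalization.for_id _ bot_le
    have : (Q ⋙ 𝟭 D).IsLocalization (thickW P).multiplicativeClosure :=
      Functor.IsLocalization.comp Q (𝟭 D) (thickW P) ⊥ _
        hinv (MorphismProperty.le_multiplicativeClosure _) bot_le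
    exact this
  have := mulClosure_calculus hP
  exact Localization.essSurj_mapArrow Q (thickW P).multiplicativeClosure

variable [HasZeroObject D] [Preadditive D] [HasShift D ℤ]
  [∀ n : ℤ, (shiftFunctor D n).Additive] [Pretriangulated D]
  {E : Type*} [Category E] [HasZeroObject E] [Preadditive E] [HasShift E ℤ]
  [∀ n : ℤ, (shiftFunctor E n).Additive] [Pretriangulated E]

lemma exists_triangulated_of_precomp (hP : IsThickSubcategory P) (Q : C ⥤ D)
    [Q.IsLocalization (thickW P)] [Q.CommShift ℤ] [Q.IsTriangulated]
    (F : D ⥤ E) (G : C ⥤ E) (e : Q ⋙ F ≅ G) [G.CommShift ℤ] [G.IsTriangulated] :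
    ∃ (_ : F.CommShift ℤ), F.IsTriangulated := by
  let : Localization.Lifting Q (thickW P) G F := ⟨e⟩
  let := Functor.commShiftOfLocalization Q (thickW P) ℤ G F
  refine ⟨inferInstance, ?_⟩
  have := essSurj_mapArrow_of_thickW hP Q
  have : NatTrans.CommShift e.hom ℤ :=
    NatTrans.commShift_iso_hom_of_localization Q (thickW P) ℤ G F
  exact Functor.isTriangulated_of_precomp_iso e

end LocTri

end DerivedModule

namespace DerivedModule

section Stage1

variable {C : Type*} [Category C] [MonoidalCategory C] {M : Type*} [Category M]
  (ms : ModuleStruct C M) {M' : Type*} [Category M'] (Q : M ⥤ M') (W : MorphismProperty M)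
  [Q.IsLocalization W] (A : C ⥤ M' ⥤ M')
  (e : ∀ X m, (A.obj X).obj (Q.obj m) ≅ Q.obj ((ms.act.obj X).obj m))
  (he : ∀ {X Y : C} (f : X ⟶ Y) (m : M),
    (A.map f).app (Q.obj m) ≫ (e Y m).hom = (e X m).hom ≫ Q.map ((ms.act.map f).app m))
  (he' : ∀ (X : C) {m n : M} (f : m ⟶ n),
    (A.obj X).map (Q.map f) ≫ (e X n).hom = (e X m).hom ≫ Q.map ((ms.act.obj X).map f))

include he in
lemma he_inv {X Y : C} (f : X ⟶ Y) (m : M) :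
    Q.map ((ms.act.map f).app m) ≫ (e Y m).inv = (e X m).inv ≫ (A.map f).app (Q.obj m) := by
  rw [Iso.comp_inv_eq, assoc, he, Iso.inv_hom_id_assoc]

include he' in
lemma he'_inv (X : C) {m n : M} (f : m ⟶ n) :
    Q.map ((ms.act.obj X).map f) ≫ (e X n).inv = (e X m).inv ≫ (A.obj X).map (Q.map f) := by
  rw [Iso.comp_inv_eq, assoc, he', Iso.inv_hom_id_assoc]

noncomputable def assoc1 (X Y : C) : A.obj (X ⊗ Y) ≅ A.obj Y ⋙ A.obj X :=
  Localization.liftNatIso Q W (Q ⋙ A.obj (X ⊗ Y)) (Q ⋙ A.obj Y ⋙ A.obj X) _ _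
    (NatIso.ofComponents (fun m => e (X ⊗ Y) m ≪≫ Q.mapIso ((ms.assocIso X Y).app m) ≪≫
      (e X ((ms.act.obj Y).obj m)).symm ≪≫ (A.obj X).mapIso (e Y m).symm) (by
        intro m n f
        have h := (ms.assocIso X Y).hom.naturality f
        have h1 := he' (X ⊗ Y) f
        have h2 := he'_inv ms Q A e he' X ((ms.act.obj Y).map f)
        have h3 := he'_inv ms Q A e he' Y f
        dsimp at h ⊢
        simp only [assoc]
        rw [reassoc_of% h1, ← Q.map_comp_assoc, h, Q.map_comp_assoc, reassoc_of% h2,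
          ← Functor.map_comp, h3, Functor.map_comp]))

lemma assoc1_app (X Y : C) (m : M) : (assoc1 ms Q W A e he' X Y).hom.app (Q.obj m) =
    (e (X ⊗ Y) m).hom ≫ Q.map ((ms.assocIso X Y).hom.app m) ≫
      (e X ((ms.act.obj Y).obj m)).inv ≫ (A.obj X).map (e Y m).inv := by
  simp [assoc1]

noncomputable def unit1 : A.obj (𝟙_ C) ≅ 𝟭 M' :=
  Localization.liftNatIso Q W (Q ⋙ A.obj (𝟙_ C)) (Q ⋙ 𝟭 M') _ _
    (NatIso.ofComponents (fun m => e (𝟙_ C) m ≪≫ Q.mapIso (ms.unitIso.app m)) (by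
        intro m n f
        have h := ms.unitIso.hom.naturality f
        have h1 := he' (𝟙_ C) f
        dsimp at h ⊢
        simp only [assoc]
        rw [reassoc_of% h1, ← Q.map_comp, h, Q.map_comp]))

lemma unit1_app (m : M) : (unit1 ms Q W A e he').hom.app (Q.obj m) =
    (e (𝟙_ C) m).hom ≫ Q.map (ms.unitIso.hom.app m) := by
  simp [unit1]

noncomputable def stage1 : ModuleStruct C M' where
  act := A
  assocIso := assoc1 ms Q W A e he'
  unitIso := unit1 ms Q W A e he'
  assoc_natural {X X' Y Y'} f g m := by
    have h := Localization.natTrans_ext Q W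
      (τ := A.map (f ⊗ₘ g) ≫ (assoc1 ms Q W A e he' X' Y').hom)
      (τ' := (assoc1 ms Q W A e he' X Y).hom ≫ Functor.whiskerLeft (A.obj Y) (A.map f) ≫
        Functor.whiskerRight (A.map g) (A.obj X')) (by
      intro m
      have h := ms.assoc_natural f g m
      have h1 := he_inv ms Q A e he f ((ms.act.obj Y).obj m)
      have h2 := he'_inv ms Q A e he' X' ((ms.act.map g).app m)
      have h3 := he_inv ms Q A e he g m
      simp only [NatTrans.comp_app, Functor.whiskerLeft_app, Functor.whiskerRight_app,
        assoc1_app, assoc]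
      rw [reassoc_of% (he (f ⊗ₘ g) m), ← Q.map_comp_assoc, h]
      simp only [Functor.map_comp, assoc]
      rw [reassoc_of% h2, reassoc_of% h1, ← Functor.map_comp, h3, Functor.map_comp,
        (A.map f).naturality_assoc])
    exact congr_app h m
  pentagon X Y Z m := by
    have h := Localization.natTrans_ext Q W
      (τ := A.map (α_ X Y Z).hom ≫ (assoc1 ms Q W A e he' X (Y ⊗ Z)).hom ≫
        Functor.whiskerRight (assoc1 ms Q W A e he' Y Z).hom (A.obj X))
      (τ' := (assoc1 ms Q W A e he' (X ⊗ Y) Z).hom ≫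
        Functor.whiskerLeft (A.obj Z) (assoc1 ms Q W A e he' X Y).hom) (by
      intro m
      have h := ms.pentagon X Y Z m
      have h1 := (assoc1 ms Q W A e he' X Y).hom.naturality (e Z m).inv
      have h2 : Q.map ((ms.act.obj X).map ((ms.assocIso Y Z).hom.app m)) ≫
          (e X ((ms.act.obj Y).obj ((ms.act.obj Z).obj m))).inv =
          (e X ((ms.act.obj (Y ⊗ Z)).obj m)).inv ≫
            (A.obj X).map (Q.map ((ms.assocIso Y Z).hom.app m)) :=
        he'_inv ms Q A e he' X ((ms.assocIso Y Z).hom.app m)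
      simp only [NatTrans.comp_app, Functor.whiskerLeft_app, Functor.whiskerRight_app,
        assoc1_app, assoc]
      rw [h1, assoc1_app]
      simp only [assoc, Functor.map_comp, Functor.comp_map, Iso.inv_hom_id_assoc]
      rw [reassoc_of% (he (α_ X Y Z).hom m), ← Functor.map_comp_assoc (A.obj X) _ (e (Y ⊗ Z) m).hom,
        Iso.inv_hom_id, CategoryTheory.Functor.map_id, Category.id_comp, ← reassoc_of% h2]
      have h' := Q.congr_map h
      simp only [Functor.map_comp] at h'
      rw [reassoc_of% h'])
    exact congr_app h m
  triangle X m := by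
    have h := Localization.natTrans_ext Q W
      (τ := A.map (ρ_ X).hom)
      (τ' := (assoc1 ms Q W A e he' X (𝟙_ C)).hom ≫
        Functor.whiskerRight (unit1 ms Q W A e he').hom (A.obj X)) (by
      intro m
      have h := ms.triangle X m
      have h2 : Q.map ((ms.act.obj X).map (ms.unitIso.hom.app m)) ≫ (e X m).inv =
          (e X ((ms.act.obj (𝟙_ C)).obj m)).inv ≫
            (A.obj X).map (Q.map (ms.unitIso.hom.app m)) :=
        he'_inv ms Q A e he' X (ms.unitIso.hom.app m)
      simp only [NatTrans.comp_app, Functor.whiskerRight_app,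
        assoc1_app, unit1_app, assoc]
      rw [← Functor.map_comp, Iso.inv_hom_id_assoc, ← h2, ← Q.map_comp_assoc, ← h,
        ← reassoc_of% (he (ρ_ X).hom m), Iso.hom_inv_id, comp_id])
    exact congr_app h m

end Stage1

end DerivedModule

namespace DerivedModule

section Stage2

variable {C : Type*} [Category C] [MonoidalCategory C] {M : Type*} [Category M]

lemma ModuleStruct.leftUnit (ms : ModuleStruct C M) (X : C) (m : M) :
    (ms.act.map (λ_ X).hom).app m =
      (ms.assocIso (𝟙_ C) X).hom.app m ≫ ms.unitIso.hom.app ((ms.act.obj X).obj m) := by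
  have hf : ∀ {x y : M} (f g : x ⟶ y),
      (ms.act.obj (𝟙_ C)).map f = (ms.act.obj (𝟙_ C)).map g → f = g := by
    intro x y f g h
    have h1 : (ms.act.obj (𝟙_ C)).map f ≫ ms.unitIso.hom.app y =
      ms.unitIso.hom.app x ≫ f := ms.unitIso.hom.naturality f
    have h2 : (ms.act.obj (𝟙_ C)).map g ≫ ms.unitIso.hom.app y =
      ms.unitIso.hom.app x ≫ g := ms.unitIso.hom.naturality g
    rw [h, h2] at h1
    exact ((cancel_epi _).1 h1).symm
  apply hf
  have p := ms.pentagon (𝟙_ C) (𝟙_ C) X m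
  have t := ms.triangle (𝟙_ C) ((ms.act.obj X).obj m)
  have n1 := ms.assoc_natural (ρ_ (𝟙_ C)).hom (𝟙 X) m
  have n2 := ms.assoc_natural (𝟙 (𝟙_ C)) (λ_ X).hom m
  simp only [CategoryTheory.Functor.map_id, NatTrans.id_app, Category.comp_id] at n1 n2
  rw [tensorHom_id, ← MonoidalCategory.triangle, ← id_tensorHom, Functor.map_comp,
    NatTrans.comp_app, assoc, n2, t, ← reassoc_of% p] at n1
  rw [cancel_epi] at n1
  rw [cancel_epi] at n1
  rw [Functor.map_comp, ← n1]
  exact (Category.id_comp _).symm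

@[reducible] def ModuleStruct.toAction (ms : ModuleStruct C M) : MonoidalLeftAction C M where
  actionObj X m := (ms.act.obj X).obj m
  actionHomLeft f m := (ms.act.map f).app m
  actionHomRight X _ _ f := (ms.act.obj X).map f
  actionAssocIso X Y m := (ms.assocIso X Y).app m
  actionUnitIso m := ms.unitIso.app m
  actionHom_def _ _ := rfl
  actionHomRight_id _ _ := by simp
  id_actionHomLeft _ _ := by simp
  actionHom_comp _ _ _ _ := by simp
  actionAssocIso_hom_naturality {c₁ c₂ c₃ c₄ d₁ d₂} f g h := by
    have := (ms.assocIso c₂ c₄).hom.naturality h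
    have h2 := reassoc_of% (ms.assoc_natural f g d₁)
    dsimp at this ⊢
    rw [assoc, this, h2]
    simp
  actionUnitIso_hom_naturality f := (ms.unitIso.hom.naturality f).symm
  whiskerLeft_actionHomLeft c c' c'' f d := by
    have h2 := ms.assoc_natural (𝟙 c) f d
    dsimp
    rw [← cancel_mono ((ms.assocIso c c'').hom.app d), ← id_tensorHom, h2]
    simp
  whiskerRight_actionHomLeft {c c'} c'' f d := by
    have h2 := ms.assoc_natural f (𝟙 c'') d
    dsimp
    rw [← cancel_mono ((ms.assocIso c' c'').hom.app d), ← tensorHom_id, h2]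
    simp
  associator_actionHom := ms.pentagon
  leftUnitor_actionHom := ms.leftUnit
  rightUnitor_actionHom := ms.triangle

attribute [local instance] endofunctorMonoidalCategory

/-- A monoidal functor to the (opposite of) endofunctors is a module structure. -/
noncomputable def ModuleStruct.ofMonoidal (A : C ⥤ M ⥤ M)
    (i : (A ⋙ mopFunctor (M ⥤ M)).Monoidal) : ModuleStruct C M :=
  letI a := MonoidalLeftAction.actionOfMonoidalFunctorToEndofunctorMop (A ⋙ mopFunctor (M ⥤ M))
  { act := A
    assocIso X Y := NatIso.ofComponents (fun m => a.actionAssocIso X Y m) (by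
      intro m n f
      have h := a.actionAssocIso_hom_naturality (𝟙 X) (𝟙 Y) f
      rw [a.actionHom_def, a.actionHom_def, a.actionHom_def, id_tensorHom_id,
        a.id_actionHomLeft, a.id_actionHomLeft, a.id_actionHomLeft] at h
      simp only [Category.id_comp] at h
      exact h)
    unitIso := NatIso.ofComponents (fun m => a.actionUnitIso m) (by
      intro m n f
      exact (a.actionUnitIso_hom_naturality f).symm)
    assoc_natural := by
      intro X X' Y Y' f g m
      have h := a.actionAssocIso_hom_naturality f g (𝟙 m)
      rw [a.actionHom_def, a.actionHom_def, a.actionHom_def,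
        a.actionHomRight_id, a.actionHomRight_id, Category.comp_id, Category.comp_id] at h
      exact h
    pentagon := a.associator_actionHom
    triangle := a.rightUnitor_actionHom }

noncomputable def stage2 {C' : Type*} [Category C'] [MonoidalCategory C']
    (Q : C ⥤ C') (W : MorphismProperty C) [Q.IsLocalization W] [W.ContainsIdentities]
    [Q.Monoidal] (A' : C' ⥤ M ⥤ M) (ms : ModuleStruct C M) (h : ms.act = Q ⋙ A') :
    ModuleStruct C' M :=
  letI := ms.toAction
  letI : Localization.Lifting Q W (MonoidalLeftAction.curriedActionMop C M)
    (A' ⋙ mopFunctor (M ⥤ M)) := 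
    ⟨Functor.isoWhiskerRight (eqToIso h.symm) (mopFunctor (M ⥤ M))⟩
  ModuleStruct.ofMonoidal A' (Localization.Monoidal.functorMonoidalOfComp Q W
    (A' ⋙ mopFunctor (M ⥤ M)) (MonoidalLeftAction.curriedActionMop C M))

lemma stage2_act {C' : Type*} [Category C'] [MonoidalCategory C']
    (Q : C ⥤ C') (W : MorphismProperty C) [Q.IsLocalization W] [W.ContainsIdentities]
    [Q.Monoidal] (A' : C' ⥤ M ⥤ M) (ms : ModuleStruct C M) (h : ms.act = Q ⋙ A') :
    (stage2 Q W A' ms h).act = A' := rfl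

end Stage2

end DerivedModule
open DerivedModule

/-- The Verdier quotient `K/L` is a left triangulated module category
over the Verdier quotient `T/J`, compatibly with the quotient functors. -/
theorem verdierQuotient_triangulatedModule
    (T : Type*) [Category T] [HasZeroObject T] [Preadditive T] [HasShift T ℤ]
    [∀ n : ℤ, (shiftFunctor T n).Additive] [Pretriangulated T] [HasBinaryBiproducts T]
    [MonoidalCategory T] [MonoidalTriangulated T]
    (K : Type*) [Category K] [HasZeroObject K] [Preadditive K] [HasShift K ℤ]
    [∀ n : ℤ, (shiftFunctor K n).Additive] [Pretriangulated K] [HasBinaryBiproducts K]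
    (tm : TriangulatedModuleStruct T K)
    -- `J` is a two-sided thick ideal of `T`
    (J : T → Prop) (hJthick : IsThickSubcategory J)
    (hJideal : ∀ (X Z : T), J Z → J (X ⊗ Z) ∧ J (Z ⊗ X))
    -- `L` is a thick `T`-submodule category of `K`
    (L : K → Prop) (hLthick : IsThickSubcategory L)
    (hLmod : ∀ (X : T) (m : K), L m → L ((tm.act.obj X).obj m))
    -- hypothesis: `J ⊗ M ∈ L` for all `J ∈ J`, `M ∈ K`
    (hJL : ∀ (Z : T) (m : K), J Z → L ((tm.act.obj Z).obj m))
    -- the Verdier quotient `T/J`, which is a monoidal triangulated category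
    (T' : Type*) [Category T'] [HasZeroObject T'] [Preadditive T'] [HasShift T' ℤ]
    [∀ n : ℤ, (shiftFunctor T' n).Additive] [Pretriangulated T']
    [MonoidalCategory T'] [MonoidalTriangulated T']
    (QT : T ⥤ T') [QT.IsLocalization (thickW J)]
    [QT.CommShift ℤ] [QT.IsTriangulated] [QT.Monoidal]
    -- the Verdier quotient `K/L`
    (K' : Type*) [Category K'] [HasZeroObject K'] [Preadditive K'] [HasShift K' ℤ]
    [∀ n : ℤ, (shiftFunctor K' n).Additive] [Pretriangulated K']
    (QK : K ⥤ K') [QK.IsLocalization (thickW L)] [QK.CommShift ℤ] [QK.IsTriangulated] :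
    ∃ tm' : TriangulatedModuleStruct T' K',
      Nonempty ((tm.act ⋙ (Functor.whiskeringRight K K K').obj QK) ≅
        (QT ⋙ tm'.act ⋙ (Functor.whiskeringLeft K K' K').obj QK)) := by
  haveI := thickW_containsIdentities hJthick
  haveI := thickW_containsIdentities hLthick
  let F₀ : T ⥤ K ⥤ K' := tm.act ⋙ (Functor.whiskeringRight K K K').obj QK
  have hF : MorphismProperty.IsInvertedBy₂ (thickW J) (thickW L) F₀ := by
    rintro ⟨X, m⟩ ⟨Y, n⟩ ⟨f, g⟩ ⟨hf, hg⟩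
    have h1 : IsIso (QK.map ((tm.act.map f).app m)) := by
      apply Localization.inverts QK (thickW L)
      letI := tm.commShift_flip m
      haveI := tm.triangulated_flip m
      obtain ⟨Z, a, b, H, hZ⟩ := hf
      exact ⟨_, _, _, (tm.act.flip.obj m).map_distinguished _ H, hJL Z m hZ⟩
    have h2 : IsIso (QK.map ((tm.act.obj Y).map g)) := by
      apply Localization.inverts QK (thickW L)
      letI := tm.commShift_obj Y
      haveI := tm.triangulated_obj Y
      obtain ⟨Z, a, b, H, hZ⟩ := hg
      exact ⟨_, _, _, (tm.act.obj Y).map_distinguished _ H, hLmod Y Z hZ⟩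
    change IsIso (QK.map ((tm.act.map f).app m) ≫ QK.map ((tm.act.obj Y).map g))
    infer_instance
  let A' : T' ⥤ K' ⥤ K' := Localization.lift₂ F₀ hF QT QK
  let i := Localization.Lifting₂.iso QT QK (thickW J) (thickW L) F₀ A'
  let e : ∀ X m, ((QT ⋙ A').obj X).obj (QK.obj m) ≅ QK.obj ((tm.act.obj X).obj m) :=
    fun X m => (i.app X).app m
  let ms1 : ModuleStruct T K' := stage1 tm.toModuleStruct QK (thickW L) (QT ⋙ A') e
    (fun f m => congr_app (i.hom.naturality f) m)
    (fun X _ _ f => (i.hom.app X).naturality f)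
  let ms2 : ModuleStruct T' K' := stage2 QT (thickW J) A' ms1 rfl
  have hobj : ∀ X : T', ∃ (_ : (A'.obj X).CommShift ℤ), (A'.obj X).IsTriangulated := by
    intro X'
    haveI := Localization.essSurj QT (thickW J)
    let X := QT.objPreimage X'
    letI := tm.commShift_obj X
    haveI := tm.triangulated_obj X
    exact exists_triangulated_of_precomp hLthick QK (A'.obj X') (tm.act.obj X ⋙ QK)
      (Functor.isoWhiskerLeft QK (A'.mapIso (QT.objObjPreimageIso X').symm) ≪≫ i.app X)
  have hflip : ∀ m : K', ∃ (_ : (A'.flip.obj m).CommShift ℤ),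
      (A'.flip.obj m).IsTriangulated := by
    intro m'
    haveI := Localization.essSurj QK (thickW L)
    let m := QK.objPreimage m'
    letI := tm.commShift_flip m
    haveI := tm.triangulated_flip m
    exact exists_triangulated_of_precomp hJthick QT (A'.flip.obj m') (tm.act.flip.obj m ⋙ QK)
      (Functor.isoWhiskerLeft QT (A'.flip.mapIso (QK.objObjPreimageIso m').symm) ≪≫
        NatIso.ofComponents (fun X => (i.app X).app m)
          (fun f => congr_app (i.hom.naturality f) m))
  choose c1 t1 using hobj
  choose c2 t2 using hflip
  refine ⟨{ toModuleStruct := ms2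
            additive_obj := fun X => letI := c1 X; haveI := t1 X; (inferInstance : (A'.obj X).Additive)
            commShift_obj := c1
            triangulated_obj := t1
            additive_flip := fun m =>
              letI := c2 m; haveI := t2 m; (inferInstance : (A'.flip.obj m).Additive)
            commShift_flip := c2
            triangulated_flip := t2 }, ⟨i.symm⟩⟩
end

section
/- Let T be a monoidal triangulated category with a compatible bounded t-structure t, and let K be a left triangulated module category over T with a bounded t-structure t′. Then the following are equivalent: (1) the module product bifunctor is compatible with t and t′, i.e. H_t ⊗ H_{t′} ⊆ H_{t′}, where H_t and H_{t′} are the hearts; (2) for all X ∈ T, M ∈ K and all integers n, m, one has τ′_{≥ n+m+1}(τ_{≤ n} X ⊗ τ′_{≤ m} M) = 0 and τ′_{≤ n+m−1}(τ_{≥ n} X ⊗ τ′_{≥ m} M) = 0, where τ, τ′ denote the truncation functors of t and t′. -/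
/-!
STATEMENT 9: Let `T` be a monoidal triangulated category with a compatible bounded
t-structure `t`, and `K` a left triangulated module category over `T` with a bounded
t-structure `t'`. Then: the module product bifunctor is compatible with `t` and `t'`
(i.e. `H_t ⊗ H_{t'} ⊆ H_{t'}`) if and only if for all `X ∈ T`, `M ∈ K` and integers
`n`, `m` one has `τ'_{≥ n+m+1}(τ_{≤ n} X ⊗ τ'_{≤ m} M) = 0` and
`τ'_{≤ n+m-1}(τ_{≥ n} X ⊗ τ'_{≥ m} M) = 0`.

Truncations are encoded by a choice of truncation triangle (`truncLEObj`,
`truncGEObj`); since truncations are unique up to isomorphism and `IsZero` is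
invariant under isomorphisms, this is faithful.
-/

open CategoryTheory Category Limits Pretriangulated MonoidalCategory ZeroObject
open CategoryTheory.Triangulated

namespace DerivedModule

section TStructureExtras

variable {K : Type*} [Category K] [HasZeroObject K] [Preadditive K] [HasShift K ℤ]
  [∀ n : ℤ, (shiftFunctor K n).Additive] [Pretriangulated K]

/-- A t-structure is bounded if every object is bounded above and below. -/
def tBounded (t : TStructure K) : Prop :=
  (∀ X : K, ∃ n : ℤ, t.le n X) ∧ (∀ X : K, ∃ n : ℤ, t.ge n X)

/-- The heart of a t-structure, as a predicate on objects. -/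
def heartP (t : TStructure K) (X : K) : Prop := t.le 0 X ∧ t.ge 0 X

/-- A choice of truncation `τ_{≤ n} A` for a t-structure. -/
noncomputable def truncLEObj (t : TStructure K) (n : ℤ) (A : K) : K :=
  (t.exists_triangle A n (n + 1) rfl).choose

/-- A choice of truncation `τ_{≥ n} A` for a t-structure. -/
noncomputable def truncGEObj (t : TStructure K) (n : ℤ) (A : K) : K :=
  (t.exists_triangle A (n - 1) n (by omega)).choose_spec.choose

/-- The cohomology object `H^n_t(A) = (τ_{≤ n} τ_{≥ n} A)⟦n⟧` of a t-structure. -/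
noncomputable def homologyObj (t : TStructure K) (n : ℤ) (A : K) : K :=
  (truncLEObj t n (truncGEObj t n A))⟦n⟧

end TStructureExtras

section Dev

variable {T : Type*} [Category T] [HasZeroObject T] [Preadditive T] [HasShift T ℤ]
  [∀ n : ℤ, (shiftFunctor T n).Additive] [Pretriangulated T] [MonoidalCategory T]

/-- The deviation of a t-structure on a monoidal triangulated category: the set of
integers `n` such that `T^{≤0} ⊗ T^{≤n} ⊆ T^{≤0}` and `T^{≥0} ⊗ T^{≥n} ⊆ T^{≥0}`. -/
def monDev (t : TStructure T) : Set ℤ :=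
  {n | (∀ X Y : T, t.le 0 X → t.le n Y → t.le 0 (X ⊗ Y)) ∧
       (∀ X Y : T, t.ge 0 X → t.ge n Y → t.ge 0 (X ⊗ Y))}

/-- A monoidal t-structure: a bounded t-structure with nonempty deviation. -/
def IsMonoidalTStructure (t : TStructure T) : Prop :=
  tBounded t ∧ (monDev t).Nonempty

variable {K : Type*} [Category K] [HasZeroObject K] [Preadditive K] [HasShift K ℤ]
  [∀ n : ℤ, (shiftFunctor K n).Additive] [Pretriangulated K]

/-- The deviation `dev_t(t')` of a t-structure `t'` on a triangulated module category
(with module product bifunctor `act`) with respect to a t-structure `t` on the acting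
monoidal triangulated category: the set of integers `m` with
`T^{≤0} ⊗ K^{≤m} ⊆ K^{≤0}` and `T^{≥0} ⊗ K^{≥m} ⊆ K^{≥0}`. -/
def modDev (act : T ⥤ K ⥤ K) (t : TStructure T) (t' : TStructure K) : Set ℤ :=
  {m | (∀ (X : T) (M : K), t.le 0 X → t'.le m M → t'.le 0 ((act.obj X).obj M)) ∧
       (∀ (X : T) (M : K), t.ge 0 X → t'.ge m M → t'.ge 0 ((act.obj X).obj M))}

/-- A triangulated module t-structure with respect to `t`: a bounded t-structure
with nonempty deviation with respect to `t`. -/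
def IsModuleTStructure (act : T ⥤ K ⥤ K) (t : TStructure T) (t' : TStructure K) : Prop :=
  tBounded t' ∧ (modDev act t t').Nonempty

end Dev

end DerivedModule

open DerivedModule


namespace DerivedModule

section Aux

variable {C : Type*} [Category C] [HasZeroObject C] [Preadditive C] [HasShift C ℤ]
  [∀ n : ℤ, (shiftFunctor C n).Additive] [Pretriangulated C] (t : TStructure C)

lemma aux_isLE₃ (Tr : Triangle C) (hT : Tr ∈ distTriang C) (n : ℤ)
    (h₁ : t.IsLE Tr.obj₁ n) (h₂ : t.IsLE Tr.obj₂ n) : t.IsLE Tr.obj₃ n := by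
  refine t.isLE₂ _ (rot_of_distTriang _ hT) n h₂ ?_
  have : t.IsLE (Tr.obj₁⟦(1 : ℤ)⟧) (n - 1) := t.isLE_shift _ n 1 (n - 1)
  exact t.isLE_of_le (Tr.obj₁⟦(1 : ℤ)⟧) (n - 1) n

lemma aux_isGE₁ (Tr : Triangle C) (hT : Tr ∈ distTriang C) (n : ℤ)
    (h₂ : t.IsGE Tr.obj₂ n) (h₃ : t.IsGE Tr.obj₃ n) : t.IsGE Tr.obj₁ n := by
  refine t.isGE₂ _ (inv_rot_of_distTriang _ hT) n ?_ h₂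
  have : t.IsGE (Tr.obj₃⟦(-1 : ℤ)⟧) (n + 1) := t.isGE_shift _ n (-1) (n + 1)
  exact t.isGE_of_ge (Tr.obj₃⟦(-1 : ℤ)⟧) n (n + 1)

lemma aux_truncLE (n : ℤ) (A : C) : ∃ (Y : C) (f : truncLEObj t n A ⟶ A) (g : A ⟶ Y)
    (h : Y ⟶ (truncLEObj t n A)⟦(1 : ℤ)⟧), t.IsLE (truncLEObj t n A) n ∧ t.IsGE Y (n + 1) ∧
      Triangle.mk f g h ∈ distTriang C := by
  obtain ⟨Y, h1, h2, f, g, h, hT⟩ := (t.exists_triangle A n (n + 1) rfl).choose_spec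
  exact ⟨Y, f, g, h, ⟨h1⟩, ⟨h2⟩, hT⟩

lemma aux_truncGE (n : ℤ) (A : C) : ∃ (X : C) (f : X ⟶ A) (g : A ⟶ truncGEObj t n A)
    (h : truncGEObj t n A ⟶ X⟦(1 : ℤ)⟧), t.IsLE X (n - 1) ∧ t.IsGE (truncGEObj t n A) n ∧
      Triangle.mk f g h ∈ distTriang C := by
  obtain ⟨h1, h2, f, g, h, hT⟩ :=
    (t.exists_triangle A (n - 1) n (by omega)).choose_spec.choose_spec
  exact ⟨_, f, g, h, ⟨h1⟩, ⟨h2⟩, hT⟩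

lemma aux_isZero_truncGE (n : ℤ) (A : C) :
    IsZero (truncGEObj t n A) ↔ t.IsLE A (n - 1) := by
  obtain ⟨X, f, g, h, h1, h2, hT⟩ := aux_truncGE t n A
  constructor
  · intro hz
    have : IsIso f := (Triangle.isZero₃_iff_isIso₁ _ hT).1 hz
    exact t.isLE_of_iso (asIso f) _
  · intro hA
    have : t.IsLE (truncGEObj t n A) (n - 1) := aux_isLE₃ t _ hT _ h1 hA
    exact t.isZero _ (n - 1) n

lemma aux_isZero_truncLE (n : ℤ) (A : C) :
    IsZero (truncLEObj t n A) ↔ t.IsGE A (n + 1) := by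
  obtain ⟨X, f, g, h, h1, h2, hT⟩ := aux_truncLE t n A
  constructor
  · intro hz
    have : IsIso g := (Triangle.isZero₁_iff_isIso₂ _ hT).1 hz
    exact t.isGE_of_iso (asIso g).symm _
  · intro hA
    have : t.IsGE (truncLEObj t n A) (n + 1) := aux_isGE₁ t _ hT _ hA h2
    exact t.isZero _ n (n + 1)

lemma aux_truncLE_iso (n : ℤ) (A : C) (hA : t.IsLE A n) : Nonempty (truncLEObj t n A ≅ A) := by
  obtain ⟨Y, f, g, h, h1, h2, hT⟩ := aux_truncLE t n A
  have : t.IsLE Y n := aux_isLE₃ t _ hT _ h1 hA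
  have : IsIso f := (Triangle.isZero₃_iff_isIso₁ _ hT).1 (t.isZero Y n (n + 1))
  exact ⟨asIso f⟩

lemma aux_truncGE_iso (n : ℤ) (A : C) (hA : t.IsGE A n) : Nonempty (truncGEObj t n A ≅ A) := by
  obtain ⟨X, f, g, h, h1, h2, hT⟩ := aux_truncGE t n A
  have : t.IsGE X n := aux_isGE₁ t _ hT _ hA h2
  have : IsIso g := (Triangle.isZero₁_iff_isIso₂ _ hT).1 (t.isZero X (n - 1) n)
  exact ⟨(asIso g).symm⟩

/-- Devissage. -/
lemma aux_devissage (P : C → Prop) (a b : ℤ) (h0 : ∀ X, IsZero X → P X)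
    (hext : ∀ Tr ∈ distTriang C, P Tr.obj₁ → P Tr.obj₃ → P Tr.obj₂)
    (hpure : ∀ (k : ℤ) (X : C), a ≤ k → k ≤ b → t.IsLE X k → t.IsGE X k → P X)
    (X : C) (ha : t.IsGE X a) (hb : t.IsLE X b) : P X := by
  obtain ⟨d, hd⟩ : ∃ d : ℕ, b - a < d := ⟨(b - a).toNat + 1, by omega⟩
  induction d generalizing b X with
  | zero => exact h0 _ (t.isZero X b a (by simp at hd; omega))
  | succ d ih =>
    by_cases hab : b < a
    · exact h0 _ (t.isZero X b a)
    obtain ⟨U, V, hU, hV, f, g, h, hT⟩ := t.exists_triangle X (b - 1) b (by omega)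
    have hU : t.IsLE U (b - 1) := ⟨hU⟩
    have hV : t.IsGE V b := ⟨hV⟩
    have hU' : t.IsGE U a := aux_isGE₁ t _ hT a ha (t.isGE_of_ge V a b)
    have hV' : t.IsLE V b := aux_isLE₃ t _ hT b (t.isLE_of_le U (b - 1) b) hb
    refine hext _ hT ?_ (hpure b V (by omega) le_rfl hV' hV)
    exact ih (b - 1) (fun k X h1 h2 ↦ hpure k X h1 (by omega)) U hU' hU (by push_cast at hd; omega)

end Aux

section Aux2

variable {T : Type*} [Category T] [HasZeroObject T] [Preadditive T] [HasShift T ℤ]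
  [∀ n : ℤ, (shiftFunctor T n).Additive] [Pretriangulated T] [MonoidalCategory T]
  {K : Type*} [Category K] [HasZeroObject K] [Preadditive K] [HasShift K ℤ]
  [∀ n : ℤ, (shiftFunctor K n).Additive] [Pretriangulated K]
  (tm : TriangulatedModuleStruct T K) (t : TStructure T) (t' : TStructure K)

lemma aux_iso (X : T) (M : K) (i j : ℤ) :
    Nonempty ((tm.act.obj (X⟦i⟧)).obj (M⟦j⟧) ≅ ((tm.act.obj X).obj M)⟦i⟧⟦j⟧) := by
  let := tm.commShift_obj (X⟦i⟧)
  let := tm.commShift_flip M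
  have e1 := ((tm.act.obj (X⟦i⟧)).commShiftIso j).app M
  have e2 := ((tm.act.flip.obj M).commShiftIso i).app X
  exact ⟨e1 ≪≫ (shiftFunctor K j).mapIso e2⟩

lemma aux_act_pure
    (H : ∀ (X : T) (M : K), heartP t X → heartP t' M → heartP t' ((tm.act.obj X).obj M))
    (X : T) (M : K) (i j : ℤ) (h1 : t.IsLE X i) (h2 : t.IsGE X i)
    (h3 : t'.IsLE M j) (h4 : t'.IsGE M j) :
    t'.IsLE ((tm.act.obj X).obj M) (i + j) ∧ t'.IsGE ((tm.act.obj X).obj M) (i + j) := by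
  obtain ⟨e⟩ := aux_iso tm X M i j
  obtain ⟨h5, h6⟩ := H (X⟦i⟧) (M⟦j⟧)
    ⟨t.le_shift i i 0 (by simp) X h1.le, t.ge_shift i i 0 (by simp) X h2.ge⟩
    ⟨t'.le_shift j j 0 (by simp) M h3.le, t'.ge_shift j j 0 (by simp) M h4.ge⟩
  have h5 : t'.IsLE _ 0 := ⟨h5⟩
  have h6 : t'.IsGE _ 0 := ⟨h6⟩
  have h5 := t'.isLE_of_iso e 0
  have h6 := t'.isGE_of_iso e 0
  rw [t'.isLE_shift_iff _ j j 0, t'.isLE_shift_iff _ (i + j) i j] at h5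
  rw [t'.isGE_shift_iff _ j j 0, t'.isGE_shift_iff _ (i + j) i j] at h6
  exact ⟨h5, h6⟩

lemma aux_devissage₂ (Q : K → Prop) (a b a' b' : ℤ) (h0 : ∀ X, IsZero X → Q X)
    (hext : ∀ Tr ∈ distTriang K, Q Tr.obj₁ → Q Tr.obj₃ → Q Tr.obj₂)
    (hpure : ∀ (i j : ℤ) (X : T) (M : K), a ≤ i → i ≤ b → a' ≤ j → j ≤ b' →
      t.IsLE X i → t.IsGE X i → t'.IsLE M j → t'.IsGE M j → Q ((tm.act.obj X).obj M))
    (X : T) (M : K) (h1 : t.IsGE X a) (h2 : t.IsLE X b) (h3 : t'.IsGE M a') (h4 : t'.IsLE M b') :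
    Q ((tm.act.obj X).obj M) := by
  refine aux_devissage t (fun X ↦ Q ((tm.act.obj X).obj M)) a b ?_ ?_ ?_ X h1 h2
  · intro X hX
    have := tm.additive_flip M
    exact h0 _ (Functor.map_isZero (tm.act.flip.obj M) hX)
  · intro Tr hT q1 q3
    let := tm.commShift_flip M
    have := tm.triangulated_flip M
    exact hext _ ((tm.act.flip.obj M).map_distinguished Tr hT) q1 q3
  intro i X hi hi' hX hX'
  refine aux_devissage t' (fun M ↦ Q ((tm.act.obj X).obj M)) a' b' ?_ ?_ ?_ M h3 h4
  · intro M hM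
    have := tm.additive_obj X
    exact h0 _ (Functor.map_isZero (tm.act.obj X) hM)
  · intro Tr hT q1 q3
    let := tm.commShift_obj X
    have := tm.triangulated_obj X
    exact hext _ ((tm.act.obj X).map_distinguished Tr hT) q1 q3
  intro j M hj hj' hM hM'
  exact hpure i j X M hi hi' hj hj' hX hX' hM hM'

end Aux2

end DerivedModule

/-- Compatibility of the module product with the t-structures is
equivalent to the vanishing of the mixed truncations. -/
theorem moduleProduct_compatible_iff_truncation_vanishing
    (T : Type*) [Category T] [HasZeroObject T] [Preadditive T] [HasShift T ℤ]
    [∀ n : ℤ, (shiftFunctor T n).Additive] [Pretriangulated T]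
    [MonoidalCategory T] [MonoidalTriangulated T]
    (K : Type*) [Category K] [HasZeroObject K] [Preadditive K] [HasShift K ℤ]
    [∀ n : ℤ, (shiftFunctor K n).Additive] [Pretriangulated K]
    (tm : TriangulatedModuleStruct T K)
    (t : TStructure T) (t' : TStructure K)
    -- `t` is a bounded t-structure compatible with the tensor product of `T`
    (htb : tBounded t)
    (htcomp : ∀ X Y : T, heartP t X → heartP t Y → heartP t (X ⊗ Y))
    -- `t'` is a bounded t-structure on `K`
    (ht'b : tBounded t') :
    (∀ (X : T) (M : K), heartP t X → heartP t' M →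
        heartP t' ((tm.act.obj X).obj M)) ↔
      (∀ (X : T) (M : K) (n m : ℤ),
        Limits.IsZero (truncGEObj t' (n + m + 1)
          ((tm.act.obj (truncLEObj t n X)).obj (truncLEObj t' m M))) ∧
        Limits.IsZero (truncLEObj t' (n + m - 1)
          ((tm.act.obj (truncGEObj t n X)).obj (truncGEObj t' m M)))) := by
  have isoLR : ∀ {X X' : T} {M M' : K}, (X ≅ X') → (M ≅ M') →
      Nonempty ((tm.act.obj X).obj M ≅ (tm.act.obj X').obj M') := fun e e' ↦
    ⟨(tm.act.mapIso e).app _ ≪≫ (tm.act.obj _).mapIso e'⟩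
  constructor
  · intro H X M n m
    constructor
    · rw [aux_isZero_truncGE]
      obtain ⟨_, _, _, _, hX, _, _⟩ := aux_truncLE t n X
      obtain ⟨_, _, _, _, hM, _, _⟩ := aux_truncLE t' m M
      obtain ⟨a, ha⟩ := htb.2 (truncLEObj t n X)
      obtain ⟨a', ha'⟩ := ht'b.2 (truncLEObj t' m M)
      refine aux_devissage₂ tm t t' (fun Y ↦ t'.IsLE Y (n + m + 1 - 1)) a n a' m
        (fun Y hY ↦ t'.isLE_of_isZero hY _) (fun Tr hT h1 h3 ↦ t'.isLE₂ Tr hT _ h1 h3) ?_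
        _ _ ⟨ha⟩ hX ⟨ha'⟩ hM
      intro i j X M _ hi _ hj h1 h2 h3 h4
      have := (aux_act_pure tm t t' H X M i j h1 h2 h3 h4).1
      exact t'.isLE_of_le _ (i + j) _
    · rw [aux_isZero_truncLE]
      obtain ⟨_, _, _, _, _, hX, _⟩ := aux_truncGE t n X
      obtain ⟨_, _, _, _, _, hM, _⟩ := aux_truncGE t' m M
      obtain ⟨a, ha⟩ := htb.1 (truncGEObj t n X)
      obtain ⟨a', ha'⟩ := ht'b.1 (truncGEObj t' m M)
      refine aux_devissage₂ tm t t' (fun Y ↦ t'.IsGE Y (n + m - 1 + 1)) n a m a'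
        (fun Y hY ↦ t'.isGE_of_isZero hY _) (fun Tr hT h1 h3 ↦ t'.isGE₂ Tr hT _ h1 h3) ?_
        _ _ hX ⟨ha⟩ hM ⟨ha'⟩
      intro i j X M hi _ hj _ h1 h2 h3 h4
      have := (aux_act_pure tm t t' H X M i j h1 h2 h3 h4).2
      exact t'.isGE_of_ge _ _ (i + j)
  · rintro H X M ⟨hX, hX'⟩ ⟨hM, hM'⟩
    obtain ⟨h1, h2⟩ := H X M 0 0
    rw [aux_isZero_truncGE] at h1
    rw [aux_isZero_truncLE] at h2
    obtain ⟨e1⟩ := aux_truncLE_iso t 0 X ⟨hX⟩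
    obtain ⟨e2⟩ := aux_truncLE_iso t' 0 M ⟨hM⟩
    obtain ⟨e3⟩ := aux_truncGE_iso t 0 X ⟨hX'⟩
    obtain ⟨e4⟩ := aux_truncGE_iso t' 0 M ⟨hM'⟩
    obtain ⟨e⟩ := isoLR e1 e2
    obtain ⟨e'⟩ := isoLR e3 e4
    exact ⟨(t'.le 0).prop_of_iso e (by simpa using h1), (t'.ge 0).prop_of_iso e' (by simpa using h2)⟩
end

section
/- Let T be a monoidal triangulated category with a compatible bounded t-structure t, and let K be a left triangulated module category over T with a bounded t-structure t′ such that the module product bifunctor is compatible with t and t′ (H_t ⊗ H_{t′} ⊆ H_{t′}). Then for every X ∈ T, M ∈ K and every integer n there is a natural isomorphism (Künneth formula) H^n_{t′}(X ⊗ M) ≅ ⊕_{p+q=n} H^p_t(X) ⊗ H^q_{t′}(M), where H^p_t and H^q_{t′} are the cohomological functors of t and t′. -/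
/-!
STATEMENT 10: Künneth formula. Let `T` be a monoidal triangulated category with a
compatible bounded t-structure `t`, and `K` a left triangulated module category over
`T` with a bounded t-structure `t'`, such that the module product bifunctor is
compatible with `t` and `t'` (`H_t ⊗ H_{t'} ⊆ H_{t'}`). Then for all `X ∈ T`,
`M ∈ K` and `n ∈ ℤ`,
`H^n_{t'}(X ⊗ M) ≅ ⊕_{p+q=n} H^p_t(X) ⊗ H^q_{t'}(M)`.

Since the t-structures are bounded, only finitely many summands are nonzero; the
(finite) coproduct is encoded by a finite set `S` of pairs `(p, q)` with `p + q = n`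
outside of which the summands vanish, together with an isomorphism of
`H^n_{t'}(X ⊗ M)` with the biproduct indexed by `S`. Cohomology objects
`H^n_t(A) = (τ_{≤n} τ_{≥n} A)⟦n⟧` are encoded via chosen truncations.
-/

open CategoryTheory Category Limits Pretriangulated MonoidalCategory ZeroObject
open CategoryTheory.Triangulated

open DerivedModule

namespace KunnethAux

section TS

variable {C : Type*} [Category C] [HasZeroObject C] [Preadditive C] [HasShift C ℤ]
  [∀ n : ℤ, (shiftFunctor C n).Additive] [Pretriangulated C] (t : TStructure C)

/-- `g : A ⟶ B` induces bijections on morphisms to objects `≥ n`. -/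
def PreBij (n : ℤ) {A B : C} (g : A ⟶ B) : Prop :=
  ∀ Y : C, t.ge n Y → Function.Bijective (fun f : B ⟶ Y => g ≫ f)

/-- `g : A ⟶ B` induces bijections on morphisms from objects `≤ n`. -/
def PostBij (n : ℤ) {A B : C} (g : A ⟶ B) : Prop :=
  ∀ Z : C, t.le n Z → Function.Bijective (fun f : Z ⟶ A => f ≫ g)

variable {t}

lemma zero_le_ge {X Y : C} (f : X ⟶ Y) {a b : ℤ} (hX : t.le a X) (hY : t.ge b Y)
    (h : a < b) : f = 0 :=
  t.zero_of_isLE_of_isGE f a b h ⟨hX⟩ ⟨hY⟩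

lemma ge_mono {X : C} {a b : ℤ} (h : a ≤ b) (hX : t.ge b X) : t.ge a X :=
  t.ge_antitone h _ hX

lemma le_mono {X : C} {a b : ℤ} (h : a ≤ b) (hX : t.le a X) : t.le b X :=
  t.le_monotone h _ hX

section Exact

variable {A B D : C} {f : A ⟶ B} {g : B ⟶ D} {h : D ⟶ A⟦(1 : ℤ)⟧}

lemma ex_comp12 (hT : Triangle.mk f g h ∈ distTriang C) : f ≫ g = 0 :=
  comp_distTriang_mor_zero₁₂ _ hT

lemma ex_comp23 (hT : Triangle.mk f g h ∈ distTriang C) : g ≫ h = 0 :=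
  comp_distTriang_mor_zero₂₃ _ hT

lemma ex_comp31 (hT : Triangle.mk f g h ∈ distTriang C) : h ≫ f⟦(1 : ℤ)⟧' = 0 :=
  comp_distTriang_mor_zero₃₁ _ hT

lemma ex_from2 (hT : Triangle.mk f g h ∈ distTriang C) {Y : C} (φ : B ⟶ Y) (hφ : f ≫ φ = 0) :
    ∃ ψ : D ⟶ Y, φ = g ≫ ψ := Triangle.yoneda_exact₂ _ hT φ hφ

lemma ex_from3 (hT : Triangle.mk f g h ∈ distTriang C) {Y : C} (φ : D ⟶ Y) (hφ : g ≫ φ = 0) :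
    ∃ ψ : A⟦(1 : ℤ)⟧ ⟶ Y, φ = h ≫ ψ := Triangle.yoneda_exact₃ _ hT φ hφ

lemma ex_from1 (hT : Triangle.mk f g h ∈ distTriang C) {Y : C} (φ : A⟦(1 : ℤ)⟧ ⟶ Y)
    (hφ : h ≫ φ = 0) : ∃ ψ : B⟦(1 : ℤ)⟧ ⟶ Y, φ = f⟦(1 : ℤ)⟧' ≫ ψ := by
  obtain ⟨ψ, hψ⟩ : ∃ ψ : B⟦(1 : ℤ)⟧ ⟶ Y, φ = (-f⟦(1 : ℤ)⟧') ≫ ψ :=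
    Triangle.yoneda_exact₃ _ (rot_of_distTriang _ hT) φ hφ
  exact ⟨-ψ, by simp [hψ]⟩

lemma ex_to2 (hT : Triangle.mk f g h ∈ distTriang C) {Y : C} (φ : Y ⟶ B) (hφ : φ ≫ g = 0) :
    ∃ ψ : Y ⟶ A, φ = ψ ≫ f := Triangle.coyoneda_exact₂ _ hT φ hφ

lemma ex_to3 (hT : Triangle.mk f g h ∈ distTriang C) {Y : C} (φ : Y ⟶ D) (hφ : φ ≫ h = 0) :
    ∃ ψ : Y ⟶ B, φ = ψ ≫ g := Triangle.coyoneda_exact₃ _ hT φ hφ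

lemma ex_to1 (hT : Triangle.mk f g h ∈ distTriang C) {Y : C} (φ : Y ⟶ A)
    (hφ : φ ≫ f = 0) : ∃ (ψ : Y ⟶ D⟦(-1 : ℤ)⟧) (κ : D⟦(-1 : ℤ)⟧ ⟶ A), φ = ψ ≫ κ := by
  obtain ⟨ψ, hψ⟩ := Triangle.coyoneda_exact₂ _ (inv_rot_of_distTriang _ hT) φ hφ
  exact ⟨ψ, _, hψ⟩

end Exact

lemma PreBij.mono {n m : ℤ} (h : n ≤ m) {A B : C} {g : A ⟶ B} (hg : PreBij t n g) :
    PreBij t m g := fun Y hY => hg Y (ge_mono h hY)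

lemma PreBij.comp {n : ℤ} {A B D : C} {g : A ⟶ B} {g' : B ⟶ D} (hg : PreBij t n g)
    (hg' : PreBij t n g') : PreBij t n (g ≫ g') := fun Y hY => by
  have := (hg Y hY).comp (hg' Y hY)
  simpa [Function.comp_def] using this

lemma PreBij.of_isIso {n : ℤ} {A B : C} (g : A ⟶ B) [IsIso g] : PreBij t n g := fun Y _ => by
  refine ⟨fun f f' h => (cancel_epi g).1 h, fun f => ⟨inv g ≫ f, by simp⟩⟩

lemma PostBij.of_isIso {n : ℤ} {A B : C} (g : A ⟶ B) [IsIso g] : PostBij t n g := fun Y _ => by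
  refine ⟨fun f f' h => (cancel_mono g).1 h, fun f => ⟨f ≫ inv g, by simp⟩⟩

lemma PostBij.comp {n : ℤ} {A B D : C} {g : A ⟶ B} {g' : B ⟶ D} (hg : PostBij t n g)
    (hg' : PostBij t n g') : PostBij t n (g ≫ g') := fun Y hY => by
  have := (hg' Y hY).comp (hg Y hY)
  simpa [Function.comp_def] using this

lemma PreBij.of_triangle {n : ℤ} {A B D : C} {f : A ⟶ B} {g : B ⟶ D} {h : D ⟶ A⟦(1 : ℤ)⟧}
    (hT : Triangle.mk f g h ∈ distTriang C)
    (h₁ : t.le (n - 1) A) : PreBij t n g := fun Y hY => by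
  constructor
  · intro x x' hx
    rw [← sub_eq_zero]
    obtain ⟨y, hy⟩ := ex_from3 hT (x - x') (by
      rw [Preadditive.comp_sub, sub_eq_zero]; exact hx)
    rw [hy, zero_le_ge y (t.le_shift (n-1) 1 (n-2) (by lia) _ h₁) hY (by lia), comp_zero]
  · intro x
    obtain ⟨y, hy⟩ := ex_from2 hT x (zero_le_ge _ h₁ hY (by lia))
    exact ⟨y, hy.symm⟩

lemma PostBij.of_triangle {n : ℤ} {A B D : C} {f : A ⟶ B} {g : B ⟶ D} {h : D ⟶ A⟦(1 : ℤ)⟧}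
    (hT : Triangle.mk f g h ∈ distTriang C)
    (h₁ : t.ge (n + 1) D) : PostBij t n f := fun Z hZ => by
  constructor
  · intro x x' hx
    rw [← sub_eq_zero]
    obtain ⟨y, κ, hy⟩ := ex_to1 hT (x - x') (by
      rw [Preadditive.sub_comp, sub_eq_zero]; exact hx)
    rw [hy, zero_le_ge y hZ (t.ge_shift (n+1) (-1) (n+2) (by lia) _ h₁) (by lia), zero_comp]
  · intro x
    obtain ⟨y, hy⟩ := ex_to2 hT x (zero_le_ge _ hZ h₁ (by lia))
    exact ⟨y, hy.symm⟩

lemma PreBij.shift {n : ℤ} {A B : C} {g : A ⟶ B} (hg : PreBij t n g) (a n' : ℤ)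
    (h : a + n' = n) : PreBij t n' (g⟦a⟧') := fun Y hY => by
  let adj := (shiftEquiv C a).toAdjunction
  have key := hg (Y⟦-a⟧) (t.ge_shift n' (-a) n (by lia) _ hY)
  have e : (fun f : B⟦a⟧ ⟶ Y => g⟦a⟧' ≫ f) =
      (adj.homEquiv A Y).symm ∘ (fun f => g ≫ f) ∘ (adj.homEquiv B Y) := by
    funext f
    apply (adj.homEquiv A Y).injective
    exact (adj.homEquiv_naturality_left g f).trans ((adj.homEquiv A Y).apply_symm_apply _).symm
  rw [e]
  exact ((adj.homEquiv A Y).symm.bijective).comp (key.comp (adj.homEquiv B Y).bijective)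

lemma PreBij.uniq {n : ℤ} {A B B' : C} {g : A ⟶ B} {g' : A ⟶ B'} (hg : PreBij t n g)
    (hg' : PreBij t n g') (hB : t.ge n B) (hB' : t.ge n B') :
    ∃ e : B ≅ B', g ≫ e.hom = g' := by
  obtain ⟨x, hx⟩ := (hg B' hB').2 g'
  obtain ⟨y, hy⟩ := (hg' B hB).2 g
  dsimp at hx hy
  refine ⟨⟨x, y, (hg B hB).1 ?_, (hg' B' hB').1 ?_⟩, hx⟩
  · simp [reassoc_of% hx, hy]
  · simp [reassoc_of% hy, hx]

lemma PostBij.uniq {n : ℤ} {A L L' : C} {g : L ⟶ A} {g' : L' ⟶ A} (hg : PostBij t n g)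
    (hg' : PostBij t n g') (hL : t.le n L) (hL' : t.le n L') :
    ∃ e : L ≅ L', e.hom ≫ g' = g := by
  obtain ⟨x, hx⟩ := (hg' L hL).2 g
  obtain ⟨y, hy⟩ := (hg L' hL').2 g'
  dsimp at hx hy
  refine ⟨⟨x, y, (hg L hL).1 ?_, (hg' L' hL').1 ?_⟩, hx⟩
  · simp [hx, hy]
  · simp [hy, hx]

variable (t) in
lemma truncGE_spec (n : ℤ) (A : C) : ∃ (L : C) (f : L ⟶ A) (g : A ⟶ truncGEObj t n A)
    (h : truncGEObj t n A ⟶ L⟦(1 : ℤ)⟧), t.le (n - 1) L ∧ t.ge n (truncGEObj t n A) ∧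
      Triangle.mk f g h ∈ distTriang C := by
  obtain ⟨h1, h2, f, g, h, hT⟩ :=
    (t.exists_triangle A (n - 1) n (by omega)).choose_spec.choose_spec
  exact ⟨_, f, g, h, h1, h2, hT⟩

variable (t) in
lemma truncLE_spec (n : ℤ) (A : C) : ∃ (B : C) (f : truncLEObj t n A ⟶ A) (g : A ⟶ B)
    (h : B ⟶ (truncLEObj t n A)⟦(1 : ℤ)⟧), t.le n (truncLEObj t n A) ∧ t.ge (n + 1) B ∧
      Triangle.mk f g h ∈ distTriang C := by
  obtain ⟨B, h1, h2, f, g, h, hT⟩ :=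
    (t.exists_triangle A n (n + 1) rfl).choose_spec
  exact ⟨_, f, g, h, h1, h2, hT⟩

lemma homology_iso {n : ℤ} {U U' U₀ : C} (u : U ⟶ U') (k : U₀ ⟶ U') (hu : PreBij t n u)
    (hk : PostBij t n k) (hU' : t.ge n U') (hU₀ : t.le n U₀) :
    Nonempty (homologyObj t n U ≅ U₀⟦n⟧) := by
  obtain ⟨L, f, g, h, hL, hG, hT⟩ := truncGE_spec t n U
  obtain ⟨e, -⟩ := PreBij.uniq (PreBij.of_triangle hT hL) hu hG hU'
  obtain ⟨B, f', g', h', hL', hB', hT'⟩ := truncLE_spec t n (truncGEObj t n U)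
  obtain ⟨e', -⟩ := PostBij.uniq
    ((PostBij.of_triangle hT' hB').comp (PostBij.of_isIso e.hom)) hk hL' hU₀
  exact ⟨(shiftFunctor C n).mapIso e'⟩

/-- Comparing homology. -/
lemma homology_congr {n : ℤ} {U V : C} (u : U ⟶ V) (hu : PreBij t n u) :
    Nonempty (homologyObj t n U ≅ homologyObj t n V) := by
  obtain ⟨L, f, g, h, hL, hG, hT⟩ := truncGE_spec t n V
  obtain ⟨B, f', g', h', hL', hB', hT'⟩ := truncLE_spec t n (truncGEObj t n V)
  exact homology_iso (u ≫ g) f' (hu.comp (PreBij.of_triangle hT hL))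
    (PostBij.of_triangle hT' hB') hG hL'

lemma homology_isZero {n m : ℤ} {U : C} (hU : t.ge m U) (h : n < m) :
    IsZero (homologyObj t n U) := by
  obtain ⟨e⟩ := homology_iso (t := t) (n := n) (𝟙 U) (0 : (0 : C) ⟶ U) (PreBij.of_isIso _)
    (fun Z hZ => ⟨fun f f' _ => (isZero_zero C).eq_of_tgt _ _, fun f => ⟨0, by
      rw [zero_le_ge f hZ hU h]; simp⟩⟩) (ge_mono h.le hU)
    (t.isLE_of_isZero (isZero_zero C) n).le
  exact IsZero.of_iso ((shiftFunctor C n).map_isZero (isZero_zero C)) e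

lemma main_split [HasFiniteBiproducts C] {n : ℤ} {U V W : C} {c : U ⟶ V} {d : V ⟶ W}
    {δ₀ : W ⟶ U⟦(1 : ℤ)⟧} (hTr : Triangle.mk c d δ₀ ∈ distTriang C)
    {U' U₀ R : C} (u : U ⟶ U')
    (k : U₀ ⟶ U') (hu : PreBij t n u) (hk : PostBij t n k) (hU' : t.ge n U') (hU₀ : t.le n U₀)
    (r : W ⟶ R) (ρ : R ⟶ U'⟦(1 : ℤ)⟧) (hR : t.ge (n + 1) R)
    (hr : δ₀ ≫ u⟦(1 : ℤ)⟧' = r ≫ ρ) :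
    Nonempty (homologyObj t n V ≅ U₀⟦n⟧ ⊞ homologyObj t n W) := by
  obtain ⟨L, l, w, h, hL, hG, hT⟩ := truncGE_spec t n W
  obtain ⟨B, ℓ, g', h', hL', hB', hT'⟩ := truncLE_spec t n (truncGEObj t n W)
  have hw : PreBij t n w := PreBij.of_triangle hT hL
  have hℓ : PostBij t n ℓ := PostBij.of_triangle hT' hB'
  have hw1 : ∀ {Y : C} (f : truncGEObj t n W ⟶ Y), t.ge (n - 1) Y → w ≫ f = 0 → f = 0 := by
    intro Y f hY hf
    obtain ⟨x, hx⟩ := ex_from3 hT f hf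
    rw [hx, zero_le_ge x (t.le_shift (n-1) 1 (n-2) (by lia) _ hL) hY (by lia), comp_zero]
  obtain ⟨r', hr'⟩ := (hw R (ge_mono (by lia) hR)).2 r
  beta_reduce at hr'
  let δ := r' ≫ ρ
  have hδ : w ≫ δ = δ₀ ≫ u⟦(1 : ℤ)⟧' := by simp [δ, reassoc_of% hr', hr]
  have hℓδ : ℓ ≫ δ = 0 := by
    simp only [δ]
    rw [← assoc, zero_le_ge (ℓ ≫ r') hL' hR (by lia), zero_comp]
  obtain ⟨E, a, b, hE⟩ : ∃ (E : C) (a : U' ⟶ E) (b : E ⟶ truncGEObj t n W),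
    Triangle.mk a b δ ∈ distTriang C := distinguished_cocone_triangle₂ δ
  obtain ⟨e, he1, he2⟩ : ∃ e : V ⟶ E, c ≫ e = u ≫ a ∧ d ≫ w = e ≫ b :=
    complete_distinguished_triangle_morphism₂ _ _ hTr hE u w hδ.symm
  have hab : a ≫ b = 0 := comp_distTriang_mor_zero₁₂ _ hE
  have hbδ : b ≫ δ = 0 := comp_distTriang_mor_zero₂₃ _ hE
  have hEge : t.ge n E := (t.isGE₂ _ hE n ⟨hU'⟩ ⟨hG⟩).ge
  -- `e` is a truncation
  have hpe : PreBij t n e := by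
    intro Y hY
    constructor
    · intro f f' hff
      rw [← sub_eq_zero]
      have hf : e ≫ (f - f') = 0 := by rw [Preadditive.comp_sub, sub_eq_zero]; exact hff
      generalize f - f' = f at hf
      have h1 : a ≫ f = 0 := (hu Y hY).1 (by
        beta_reduce
        rw [comp_zero, ← assoc, ← he1, assoc, hf, comp_zero])
      obtain ⟨g, hg⟩ := ex_from2 hE f h1
      have h2 : d ≫ w ≫ g = 0 := by
        rw [← assoc, he2, assoc, ← hg, hf]
      obtain ⟨x, hx⟩ := ex_from3 hTr _ h2
      obtain ⟨x', hx'⟩ := (hu.shift 1 (n - 1) (by lia) Y (ge_mono (by lia) hY)).2 x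
      beta_reduce at hx'
      have h3 : g = δ ≫ x' := (hw Y hY).1 (by
        beta_reduce
        rw [hx, ← hx', reassoc_of% hδ])
      rw [hg, h3, reassoc_of% hbδ, zero_comp]
    · intro f
      obtain ⟨f1, hf1⟩ := (hu Y hY).2 (c ≫ f)
      beta_reduce at hf1
      have h0 : δ ≫ f1⟦(1 : ℤ)⟧' = 0 := by
        apply hw1 _ (t.ge_shift n 1 (n - 1) (by lia) _ hY)
        rw [reassoc_of% hδ, ← Functor.map_comp, hf1, Functor.map_comp,
          ← assoc, ex_comp31 hTr, zero_comp]
      obtain ⟨y, hy⟩ := ex_from1 hE (f1⟦(1 : ℤ)⟧') h0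
      obtain ⟨f2, hf2⟩ := (shiftFunctor C (1 : ℤ)).map_surjective y
      have h1 : f1 = a ≫ f2 := (shiftFunctor C (1 : ℤ)).map_injective (by
        rw [hy, Functor.map_comp, hf2])
      obtain ⟨g, hg⟩ := ex_from2 hTr (f - e ≫ f2) (by
        rw [Preadditive.comp_sub, ← hf1, h1, reassoc_of% he1, sub_self])
      obtain ⟨g', hg'⟩ := (hw Y hY).2 g
      beta_reduce at hg'
      refine ⟨f2 + b ≫ g', ?_⟩
      beta_reduce
      rw [Preadditive.comp_add, ← reassoc_of% he2, hg', ← hg]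
      abel
  obtain ⟨s, hs⟩ := ex_to3 hE ℓ hℓδ
  have hle : t.le n (U₀ ⊞ truncLEObj t n (truncGEObj t n W)) :=
    (t.isLE₂ _ (binaryBiproductTriangle_distinguished _ _) n ⟨hU₀⟩ ⟨hL'⟩).le
  have hpost : PostBij t n (biprod.desc (k ≫ a) s) := by
    intro Z hZ
    constructor
    · intro z z' hzz
      rw [← sub_eq_zero]
      have hz : (z - z') ≫ biprod.desc (k ≫ a) s = 0 := by
        rw [Preadditive.sub_comp, sub_eq_zero]; exact hzz
      generalize z - z' = z at hz
      have hz' : (z ≫ biprod.fst) ≫ k ≫ a + (z ≫ biprod.snd) ≫ s = 0 := by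
        rw [← hz, biprod.desc_eq]; simp
      have h2 : z ≫ biprod.snd = 0 := (hℓ Z hZ).1 (by
        have := congr($hz' ≫ b)
        simp only [Preadditive.add_comp, assoc, hab, comp_zero, zero_add, ← hs, zero_comp] at this
        simpa using this)
      rw [h2, zero_comp, add_zero] at hz'
      have h1 : z ≫ biprod.fst = 0 := (hk Z hZ).1 (by
        beta_reduce
        rw [zero_comp]
        obtain ⟨y, κ, hy⟩ := ex_to1 hE
          ((z ≫ biprod.fst) ≫ k) (by rw [assoc]; exact hz')
        rw [hy, zero_le_ge y hZ (t.ge_shift n (-1) (n+1) (by lia) _ hG) (by lia), zero_comp])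
      exact biprod.hom_ext _ _ (by simpa using h1) (by simpa using h2)
    · intro y
      obtain ⟨z2, hz2⟩ := (hℓ Z hZ).2 (y ≫ b)
      beta_reduce at hz2
      obtain ⟨x, hx⟩ := ex_to2 hE (y - z2 ≫ s) (by
        rw [Preadditive.sub_comp, assoc, ← hs, hz2, sub_self])
      obtain ⟨z1, hz1⟩ := (hk Z hZ).2 x
      beta_reduce at hz1
      refine ⟨biprod.lift z1 z2, ?_⟩
      beta_reduce
      rw [biprod.lift_desc, reassoc_of% hz1, ← hx]
      abel
  obtain ⟨i⟩ := homology_iso e (biprod.desc (k ≫ a) s) hpe hpost hEge hle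
  have := preservesBinaryBiproducts_of_preservesBiproducts (shiftFunctor C n)
  exact ⟨i ≪≫ (shiftFunctor C n).mapBiprod _ _⟩

end TS

section Dev

variable {C : Type*} [Category C] [HasZeroObject C] [Preadditive C] [HasShift C ℤ]
  [∀ n : ℤ, (shiftFunctor C n).Additive] [Pretriangulated C] {t : TStructure C}

lemma isZero_of_bounds {X : C} {a b : ℤ} (hb : t.ge b X) (ha : t.le a X) (h : a < b) :
    IsZero X := (IsZero.iff_id_eq_zero X).2 (zero_le_ge _ ha hb h)

lemma ext_le {A B D : C} {f : A ⟶ B} {g : B ⟶ D} {h : D ⟶ A⟦(1 : ℤ)⟧}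
    (hT : Triangle.mk f g h ∈ distTriang C) {n : ℤ} (hA : t.le n A) (hD : t.le n D) :
    t.le n B := (t.isLE₂ _ hT n ⟨hA⟩ ⟨hD⟩).le

lemma ext_ge {A B D : C} {f : A ⟶ B} {g : B ⟶ D} {h : D ⟶ A⟦(1 : ℤ)⟧}
    (hT : Triangle.mk f g h ∈ distTriang C) {n : ℤ} (hA : t.ge n A) (hD : t.ge n D) :
    t.ge n B := (t.isGE₂ _ hT n ⟨hA⟩ ⟨hD⟩).ge

lemma step {X : C} {lo hi : ℤ} (hlo : t.ge lo X) (hhi : t.le hi X) (hlh : lo ≤ hi) :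
    ∃ (A B : C) (f : A ⟶ X) (g : X ⟶ B) (h : B ⟶ A⟦(1 : ℤ)⟧),
      Triangle.mk f g h ∈ distTriang C ∧ t.le lo A ∧ t.ge lo A ∧ t.ge (lo + 1) B ∧ t.le hi B := by
  obtain ⟨A, B, hA, hB, f, g, h, hT⟩ := t.exists_triangle X lo (lo + 1) rfl
  refine ⟨A, B, f, g, h, hT, hA, ?_, hB, ?_⟩
  · exact (t.isGE₂ _ (inv_rot_of_distTriang _ hT) lo
      ⟨ge_mono (by lia) (t.ge_shift (lo + 1) (-1) (lo + 2) (by lia) _ hB)⟩ ⟨hlo⟩).ge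
  · exact (t.isLE₂ _ (rot_of_distTriang _ hT) hi ⟨hhi⟩
      ⟨le_mono (by lia) (t.le_shift lo 1 (lo - 1) (by lia) _ hA)⟩).le

lemma devissage (P : C → Prop) (h0 : ∀ X, IsZero X → P X)
    (hext : ∀ {A B D : C} (f : A ⟶ B) (g : B ⟶ D) (h : D ⟶ A⟦(1 : ℤ)⟧),
      Triangle.mk f g h ∈ distTriang C → P A → P D → P B) (hi : ℤ) (N : ℕ) :
    ∀ lo : ℤ, hi + 1 ≤ lo + N →
    (∀ (d : ℤ) (X : C), lo ≤ d → d ≤ hi → t.le d X → t.ge d X → P X) →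
    ∀ X, t.ge lo X → t.le hi X → P X := by
  induction N with
  | zero =>
    intro lo hN _ X h1 h2
    exact h0 _ (isZero_of_bounds h1 h2 (by simp at hN; lia))
  | succ N ih =>
    intro lo hN hP X h1 h2
    by_cases hlh : lo ≤ hi
    · obtain ⟨A, B, f, g, h, hT, hA, hA', hB, hB'⟩ := step h1 h2 hlh
      refine hext f g h hT (hP lo A le_rfl hlh hA hA') (ih (lo + 1) (by push_cast at hN; lia)
        (fun d Y hd => hP d Y (by lia)) B hB hB')
    · exact h0 _ (isZero_of_bounds h1 h2 (by lia))

lemma heart_shift {X : C} {d : ℤ} (h : t.le d X) (h' : t.ge d X) :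
    heartP t (X⟦d⟧) := ⟨t.le_shift d d 0 (by lia) _ h, t.ge_shift d d 0 (by lia) _ h'⟩

variable {D : Type*} [Category D] [HasZeroObject D] [Preadditive D] [HasShift D ℤ]
  [∀ n : ℤ, (shiftFunctor D n).Additive] [Pretriangulated D] {t' : TStructure D}

lemma map_dist (F : C ⥤ D) [F.CommShift ℤ] [F.IsTriangulated] {A B E : C} {f : A ⟶ B}
    {g : B ⟶ E} {h : E ⟶ A⟦(1 : ℤ)⟧} (hT : Triangle.mk f g h ∈ distTriang C) :
    Triangle.mk (F.map f) (F.map g) (F.map h ≫ (F.commShiftIso (1 : ℤ)).hom.app A) ∈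
      distTriang D := F.map_distinguished _ hT

lemma isZero_le {X : C} (h : IsZero X) (n : ℤ) : t.le n X := (t.isLE_of_isZero h n).le
lemma isZero_ge {X : C} (h : IsZero X) (n : ℤ) : t.ge n X := (t.isGE_of_isZero h n).ge

lemma F_le (F : C ⥤ D) [F.Additive] [F.CommShift ℤ] [F.IsTriangulated] (ht : tBounded t) (a b : ℤ)
    (hF : ∀ d X, t.le d X → t.ge d X → t'.le (d + b) (F.obj X)) (X : C) (hX : t.le a X) :
    t'.le (a + b) (F.obj X) := by
  obtain ⟨lo, hlo⟩ := ht.2 X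
  refine devissage (t := t) (fun X => t'.le (a + b) (F.obj X))
    (fun X hX => isZero_le (F.map_isZero hX) _)
    (fun f g h hT hA hB => ext_le (map_dist F hT) hA hB) a (a + 1 - lo).toNat lo (by lia)
    (fun d X _ hd h1 h2 => le_mono (by lia) (hF d X h1 h2)) X hlo hX

lemma F_ge (F : C ⥤ D) [F.Additive] [F.CommShift ℤ] [F.IsTriangulated] (ht : tBounded t) (a b : ℤ)
    (hF : ∀ d X, t.le d X → t.ge d X → t'.ge (d + b) (F.obj X)) (X : C) (hX : t.ge a X) :
    t'.ge (a + b) (F.obj X) := by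
  obtain ⟨hi, hhi⟩ := ht.1 X
  refine devissage (t := t) (fun X => t'.ge (a + b) (F.obj X))
    (fun X hX => isZero_ge (F.map_isZero hX) _)
    (fun f g h hT hA hB => ext_ge (map_dist F hT) hA hB) hi (hi + 1 - a).toNat a (by lia)
    (fun d X hd _ h1 h2 => ge_mono (by lia) (hF d X h1 h2)) X hX hhi

end Dev

section Act

variable {T : Type*} [Category T] [HasZeroObject T] [Preadditive T] [HasShift T ℤ]
    [∀ n : ℤ, (shiftFunctor T n).Additive] [Pretriangulated T]
    [MonoidalCategory T]
    {K : Type*} [Category K] [HasZeroObject K] [Preadditive K] [HasShift K ℤ]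
    [∀ n : ℤ, (shiftFunctor K n).Additive] [Pretriangulated K]
    (tm : TriangulatedModuleStruct T K)
    {t : TStructure T} {t' : TStructure K}

instance (X : T) : (tm.act.obj X).Additive := tm.additive_obj X
noncomputable instance (X : T) : (tm.act.obj X).CommShift ℤ := tm.commShift_obj X
instance (X : T) : (tm.act.obj X).IsTriangulated := tm.triangulated_obj X
instance (M : K) : (tm.act.flip.obj M).Additive := tm.additive_flip M
noncomputable instance (M : K) : (tm.act.flip.obj M).CommShift ℤ := tm.commShift_flip M
instance (M : K) : (tm.act.flip.obj M).IsTriangulated := tm.triangulated_flip M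

/-- Shifting the first variable. -/
noncomputable def shL (X : T) (M : K) (a : ℤ) :
    (tm.act.obj (X⟦a⟧)).obj M ≅ ((tm.act.obj X).obj M)⟦a⟧ :=
  ((tm.act.flip.obj M).commShiftIso a).app X

/-- Shifting the second variable. -/
noncomputable def shR (X : T) (M : K) (a : ℤ) :
    (tm.act.obj X).obj (M⟦a⟧) ≅ ((tm.act.obj X).obj M)⟦a⟧ :=
  ((tm.act.obj X).commShiftIso a).app M

/-- Shifting both variables. -/
noncomputable def shLR (X : T) (M : K) (a b n : ℤ) (h : a + b = n) :
    (tm.act.obj (X⟦a⟧)).obj (M⟦b⟧) ≅ ((tm.act.obj X).obj M)⟦n⟧ :=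
  shR tm (X⟦a⟧) M b ≪≫ (shiftFunctor K b).mapIso (shL tm X M a) ≪≫
    ((shiftFunctorAdd' K a b n h).app _).symm

lemma pure_act (hcomp : ∀ (X : T) (M : K), heartP t X → heartP t' M →
      heartP t' ((tm.act.obj X).obj M)) {X : T} {M : K} {a b : ℤ} (h : t.le a X) (h' : t.ge a X)
    (g : t'.le b M) (g' : t'.ge b M) :
    t'.le (a + b) ((tm.act.obj X).obj M) ∧ t'.ge (a + b) ((tm.act.obj X).obj M) := by
  have := hcomp _ _ (heart_shift h h') (heart_shift g g')
  have h1 := (t'.le 0).prop_of_iso (shLR tm X M a b _ rfl) this.1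
  have h2 := (t'.ge 0).prop_of_iso (shLR tm X M a b _ rfl) this.2
  exact ⟨((t'.isLE_shift_iff _ (a + b) (a + b) 0 (by lia)).1 ⟨h1⟩).le,
    ((t'.isGE_shift_iff _ (a + b) (a + b) 0 (by lia)).1 ⟨h2⟩).ge⟩

lemma act_le (hcomp : ∀ (X : T) (M : K), heartP t X → heartP t' M →
      heartP t' ((tm.act.obj X).obj M)) (htb : tBounded t) (ht'b : tBounded t') {X : T} {M : K} {a b : ℤ} (h : t.le a X)
    (g : t'.le b M) : t'.le (a + b) ((tm.act.obj X).obj M) := by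
  refine F_le (t := t) (tm.act.flip.obj M) htb a b (fun d X h h' => ?_) X h
  rw [add_comm]
  exact F_le (t := t') (tm.act.obj X) ht'b b d (fun d' M g g' => by
    rw [add_comm]; exact (pure_act tm hcomp h h' g g').1) M g

lemma act_ge (hcomp : ∀ (X : T) (M : K), heartP t X → heartP t' M →
      heartP t' ((tm.act.obj X).obj M)) (htb : tBounded t) (ht'b : tBounded t') {X : T} {M : K} {a b : ℤ} (h : t.ge a X)
    (g : t'.ge b M) : t'.ge (a + b) ((tm.act.obj X).obj M) := by
  refine F_ge (t := t) (tm.act.flip.obj M) htb a b (fun d X h h' => ?_) X h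
  rw [add_comm]
  exact F_ge (t := t') (tm.act.obj X) ht'b b d (fun d' M g g' => by
    rw [add_comm]; exact (pure_act tm hcomp h h' g g').2) M g

end Act

section Bip

variable {K : Type*} [Category K] [Preadditive K] [HasFiniteBiproducts K] [HasBinaryBiproducts K]

lemma bip_insert {ι : Type*} [DecidableEq ι] (f : ι → K) (s : ι) (S : Finset ι) (hs : s ∉ S) :
    Nonempty ((f s ⊞ ⨁ fun x : S => f x.1) ≅ ⨁ fun x : {y // y ∈ insert s S} => f x.1) := by
  let F : {y // y ∈ insert s S} → K := fun x => f x.1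
  let G : S → K := fun x => f x.1
  have hm : ∀ x : {y // y ∈ insert s S}, x.1 ≠ s → x.1 ∈ S := fun x hx =>
    (Finset.mem_insert.1 x.2).resolve_left hx
  let a : f s ⟶ ⨁ F := biproduct.ι F ⟨s, Finset.mem_insert_self _ _⟩
  let b : (⨁ G) ⟶ ⨁ F := biproduct.desc (fun x =>
    biproduct.ι F ⟨x.1, Finset.mem_insert_of_mem x.2⟩)
  let c : (x : {y // y ∈ insert s S}) → F x ⟶ f s ⊞ ⨁ G := fun x =>
    if h : x.1 = s then eqToHom (congrArg f h) ≫ biprod.inl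
    else biproduct.ι G ⟨x.1, hm x h⟩ ≫ biprod.inr
  have hc1 : c ⟨s, Finset.mem_insert_self _ _⟩ = biprod.inl := by
    simp [c]
    rfl
  have hc2 : ∀ x : S, c ⟨x.1, Finset.mem_insert_of_mem x.2⟩ = biproduct.ι G x ≫ biprod.inr := by
    intro x
    have : x.1 ≠ s := fun h => hs (h ▸ x.2)
    simp [c, this]
  refine ⟨⟨biprod.desc a b, biproduct.desc c, ?_, ?_⟩⟩
  · apply biprod.hom_ext'
    · simp [a, hc1]
      rfl
    · apply biproduct.hom_ext'
      intro x
      simp [b, hc2]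
      rfl
  · apply biproduct.hom_ext'
    intro ⟨x, hx⟩
    by_cases h : x = s
    · subst h
      rw [biproduct.ι_desc_assoc, hc1]
      simp [a, F]
    · have := hc2 ⟨x, hm ⟨x, hx⟩ h⟩
      rw [biproduct.ι_desc_assoc, this]
      simp [b, F]

lemma bip_empty {ι : Type*} (f : ι → K) :
    IsZero (⨁ fun x : (∅ : Finset ι) => f x.1) := by
  rw [IsZero.iff_id_eq_zero]
  apply biproduct.hom_ext'
  intro ⟨x, hx⟩
  exact absurd hx (Finset.notMem_empty x)

end Bip

section Main

variable {T : Type*} [Category T] [HasZeroObject T] [Preadditive T] [HasShift T ℤ]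
    [∀ n : ℤ, (shiftFunctor T n).Additive] [Pretriangulated T]
    [MonoidalCategory T]
    {K : Type*} [Category K] [HasZeroObject K] [Preadditive K] [HasShift K ℤ]
    [∀ n : ℤ, (shiftFunctor K n).Additive] [Pretriangulated K] [HasFiniteBiproducts K]
    (tm : TriangulatedModuleStruct T K)
    {t : TStructure T} {t' : TStructure K}

lemma kunneth_step (hcomp : ∀ (X : T) (M : K), heartP t X → heartP t' M →
      heartP t' ((tm.act.obj X).obj M)) (htb : tBounded t) (ht'b : tBounded t')
    {A Y Z : T} {f : A ⟶ Y} {g : Y ⟶ Z} {δ : Z ⟶ A⟦(1 : ℤ)⟧}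
    (hT : Triangle.mk f g δ ∈ distTriang T) {lo : ℤ} (hA : t.le lo A) (hA' : t.ge lo A)
    (hZ : t.ge (lo + 1) Z) (M : K) (q n : ℤ) (hq : lo + q = n) :
    Nonempty (homologyObj t' n ((tm.act.obj Y).obj M) ≅
      (tm.act.obj (A⟦lo⟧)).obj (homologyObj t' q M) ⊞
        homologyObj t' n ((tm.act.obj Z).obj M)) := by
  obtain ⟨L, l, π, h, hL, hτ, hTM⟩ := truncGE_spec t' q M
  obtain ⟨B, k, g', h', hC, hB, hTC⟩ := truncLE_spec t' q (truncGEObj t' q M)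
  have hTr : Triangle.mk ((tm.act.map f).app M) ((tm.act.map g).app M)
      ((tm.act.map δ).app M ≫ (shL tm A M 1).hom) ∈ distTriang K :=
    map_dist (tm.act.flip.obj M) hT
  have hu : PreBij t' n ((tm.act.obj A).map π) :=
    PreBij.of_triangle (map_dist (tm.act.obj A) hTM)
      (le_mono (by lia) (act_le tm hcomp htb ht'b hA hL))
  have hu1 : PreBij t' (n - 1) ((tm.act.obj (A⟦(1 : ℤ)⟧)).map π) :=
    PreBij.of_triangle (map_dist (tm.act.obj (A⟦(1 : ℤ)⟧)) hTM)
      (le_mono (by lia) (act_le tm hcomp htb ht'b (t.le_shift lo 1 (lo - 1) (by lia) _ hA) hL))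
  have hk : PostBij t' n ((tm.act.obj A).map k) :=
    PostBij.of_triangle (map_dist (tm.act.obj A) hTC)
      (ge_mono (by lia) (act_ge tm hcomp htb ht'b hA' hB))
  have hU' : t'.ge n ((tm.act.obj A).obj (truncGEObj t' q M)) :=
    hq ▸ act_ge tm hcomp htb ht'b hA' hτ
  have hU₀ : t'.le n ((tm.act.obj A).obj (truncLEObj t' q (truncGEObj t' q M))) :=
    hq ▸ act_le tm hcomp htb ht'b hA hC
  have hR : t'.ge (n + 1) ((tm.act.obj Z).obj (truncGEObj t' q M)) :=
    ge_mono (by lia) (act_ge tm hcomp htb ht'b hZ hτ)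
  obtain ⟨ρ, hρ⟩ := (hu1 _ (t'.ge_shift n 1 (n - 1) (by lia) _ hU')).2
    ((shL tm A M 1).hom ≫ ((tm.act.obj A).map π)⟦(1 : ℤ)⟧')
  beta_reduce at hρ
  obtain ⟨i⟩ := main_split hTr ((tm.act.obj A).map π) ((tm.act.obj A).map k) hu hk hU' hU₀
    ((tm.act.obj Z).map π) ((tm.act.map δ).app _ ≫ ρ) hR (by
      rw [← assoc ((tm.act.obj Z).map π), (tm.act.map δ).naturality π, assoc, assoc, hρ])
  exact ⟨i ≪≫ biprod.mapIso (shLR tm _ _ lo q n hq).symm (Iso.refl _)⟩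

lemma kunneth_aux (hcomp : ∀ (X : T) (M : K), heartP t X → heartP t' M →
      heartP t' ((tm.act.obj X).obj M)) (htb : tBounded t) (ht'b : tBounded t') (M : K)
    (n hi : ℤ) (N : ℕ) : ∀ (lo : ℤ) (X : T), hi + 1 ≤ lo + N → t.ge lo X → t.le hi X →
    ∃ S : Finset (ℤ × ℤ),
      (∀ p ∈ S, p.1 + p.2 = n ∧ lo ≤ p.1) ∧
      (∀ p q : ℤ, p + q = n → (p, q) ∉ S →
        Limits.IsZero ((tm.act.obj (homologyObj t p X)).obj (homologyObj t' q M))) ∧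
      Nonempty (homologyObj t' n ((tm.act.obj X).obj M) ≅
        (⨁ fun s : S => (tm.act.obj (homologyObj t s.1.1 X)).obj
          (homologyObj t' s.1.2 M))) := by
  have hflip : ∀ (X : T) (M : K), IsZero X → IsZero ((tm.act.obj X).obj M) :=
    fun X M h => (tm.act.flip.obj M).map_isZero h
  have base : ∀ (lo : ℤ) (X : T), hi < lo → t.ge lo X → t.le hi X →
    ∃ S : Finset (ℤ × ℤ),
      (∀ p ∈ S, p.1 + p.2 = n ∧ lo ≤ p.1) ∧
      (∀ p q : ℤ, p + q = n → (p, q) ∉ S →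
        Limits.IsZero ((tm.act.obj (homologyObj t p X)).obj (homologyObj t' q M))) ∧
      Nonempty (homologyObj t' n ((tm.act.obj X).obj M) ≅
        (⨁ fun s : S => (tm.act.obj (homologyObj t s.1.1 X)).obj
          (homologyObj t' s.1.2 M))) := by
    intro lo X hlt h1 h2
    have hX := isZero_of_bounds h1 h2 hlt
    refine ⟨∅, by simp, fun p q _ _ => hflip _ _
      (homology_isZero (m := p + 1) (isZero_ge hX _) (by lia)), ⟨IsZero.iso ?_ ?_⟩⟩
    · exact homology_isZero (m := n + 1) (isZero_ge (hflip _ _ hX) _) (by lia)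
    · exact bip_empty (fun s : ℤ × ℤ => (tm.act.obj (homologyObj t s.1 X)).obj
          (homologyObj t' s.2 M))
  induction N with
  | zero =>
    intro lo X hN h1 h2
    exact base lo X (by simp at hN; lia) h1 h2
  | succ N ih =>
    intro lo X hN h1 h2
    by_cases hlh : lo ≤ hi
    swap
    · exact base lo X (by lia) h1 h2
    obtain ⟨A, Z, f, g, δ, hT, hA, hA', hZ, hZ'⟩ := step h1 h2 hlh
    obtain ⟨S, hS1, hS2, ⟨i⟩⟩ := ih (lo + 1) Z (by push_cast at hN; lia) hZ hZ'
    obtain ⟨j⟩ := kunneth_step tm hcomp htb ht'b hT hA hA' hZ M (n - lo) n (by lia)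
    obtain ⟨e₀⟩ := homology_iso (t := t) (n := lo) (𝟙 X) f (PreBij.of_isIso _)
      (PostBij.of_triangle hT hZ) h1 hA
    have e : ∀ p, lo + 1 ≤ p → Nonempty (homologyObj t p X ≅ homologyObj t p Z) := fun p hp =>
      homology_congr g (PreBij.of_triangle hT (le_mono (by lia) hA))
    have hns : (lo, n - lo) ∉ S := fun h => by have := (hS1 _ h).2; dsimp at this; lia
    refine ⟨insert (lo, n - lo) S, ?_, ?_, ?_⟩
    · intro p hp
      rcases Finset.mem_insert.1 hp with rfl | hp
      · exact ⟨by dsimp; lia, le_rfl⟩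
      · exact ⟨(hS1 p hp).1, by have := (hS1 p hp).2; lia⟩
    · intro p q hpq hnot
      rw [Finset.mem_insert, not_or] at hnot
      rcases lt_trichotomy p lo with hp | hp | hp
      · exact hflip _ _ (homology_isZero h1 hp)
      · exact absurd (by ext <;> simp <;> lia) hnot.1
      · obtain ⟨e⟩ := e p (by lia)
        exact (hS2 p q hpq hnot.2).of_iso ((tm.act.mapIso e).app _)
    · obtain ⟨b⟩ := bip_insert (fun s : ℤ × ℤ => (tm.act.obj (homologyObj t s.1 X)).obj
          (homologyObj t' s.2 M)) (lo, n - lo) S hns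
      have c : (⨁ fun s : S => (tm.act.obj (homologyObj t s.1.1 Z)).obj
          (homologyObj t' s.1.2 M)) ≅ ⨁ fun s : S => (tm.act.obj (homologyObj t s.1.1 X)).obj
          (homologyObj t' s.1.2 M) :=
        biproduct.mapIso fun s => (tm.act.mapIso (e s.1.1 (hS1 _ s.2).2).some.symm).app _
      exact ⟨j ≪≫ biprod.mapIso ((tm.act.mapIso e₀.symm).app _) (i ≪≫ c) ≪≫ b⟩

end Main

end KunnethAux


/-- The Künneth formula
`H^n_{t'}(X ⊗ M) ≅ ⊕_{p+q=n} H^p_t(X) ⊗ H^q_{t'}(M)` for a compatible module product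
bifunctor. -/
theorem kunneth_formula_triangulatedModule
    (T : Type*) [Category T] [HasZeroObject T] [Preadditive T] [HasShift T ℤ]
    [∀ n : ℤ, (shiftFunctor T n).Additive] [Pretriangulated T]
    [MonoidalCategory T] [MonoidalTriangulated T]
    (K : Type*) [Category K] [HasZeroObject K] [Preadditive K] [HasShift K ℤ]
    [∀ n : ℤ, (shiftFunctor K n).Additive] [Pretriangulated K]
    [HasFiniteBiproducts K]
    (tm : TriangulatedModuleStruct T K)
    (t : TStructure T) (t' : TStructure K)
    -- `t` is a bounded t-structure compatible with the tensor product of `T`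
    (htb : tBounded t)
    (htcomp : ∀ X Y : T, heartP t X → heartP t Y → heartP t (X ⊗ Y))
    -- `t'` is a bounded t-structure on `K`
    (ht'b : tBounded t')
    -- the module product bifunctor is compatible with `t` and `t'`
    (hcomp : ∀ (X : T) (M : K), heartP t X → heartP t' M →
      heartP t' ((tm.act.obj X).obj M)) :
    ∀ (X : T) (M : K) (n : ℤ), ∃ S : Finset (ℤ × ℤ),
      (∀ p ∈ S, p.1 + p.2 = n) ∧
      (∀ p q : ℤ, p + q = n → (p, q) ∉ S →
        Limits.IsZero ((tm.act.obj (homologyObj t p X)).obj (homologyObj t' q M))) ∧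
      Nonempty (homologyObj t' n ((tm.act.obj X).obj M) ≅
        (⨁ fun s : S => (tm.act.obj (homologyObj t s.1.1 X)).obj
          (homologyObj t' s.1.2 M))) := by
  intro X M n
  obtain ⟨hi, hhi⟩ := htb.1 X
  obtain ⟨lo, hlo⟩ := htb.2 X
  obtain ⟨S, h1, h2, h3⟩ := KunnethAux.kunneth_aux tm hcomp htb ht'b M n hi (hi + 1 - lo).toNat lo X
    (by lia) hlo hhi
  exact ⟨S, fun p hp => (h1 p hp).1, h2, h3⟩
end

section
/- Let T be a monoidal triangulated category equipped with a monoidal t-structure t with 0 ∈ dev(t), and let K be a left triangulated module category over T with a triangulated module t-structure t′ with respect to t such that 0 ∈ dev_t(t′). Then K is faithful as a T-module category (every nonzero object of T acts by a nonzero functor on K) if and only if the heart H_{t′} is faithful as a module category over the heart H_t. -/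
/-!
STATEMENT 15: Let `T` be a monoidal triangulated category with a monoidal t-structure
`t` with `0 ∈ dev(t)`, and `K` a left triangulated module category over `T` with a
triangulated module t-structure `t'` with respect to `t` such that `0 ∈ dev_t(t')`.
Then `K` is faithful as a `T`-module category (every nonzero object of `T` acts by a
nonzero functor on `K`) if and only if the heart `H_{t'}` is faithful as a module
category over the heart `H_t`.
-/

open CategoryTheory Category Limits Pretriangulated MonoidalCategory ZeroObject
open CategoryTheory.Triangulated

open DerivedModule

namespace DerivedModule

section Helpers

variable {C : Type*} [Category C] [HasZeroObject C] [Preadditive C] [HasShift C ℤ]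
  [∀ n : ℤ, (shiftFunctor C n).Additive] [Pretriangulated C]
  {D : Type*} [Category D] [HasZeroObject D] [Preadditive D] [HasShift D ℤ]
  [∀ n : ℤ, (shiftFunctor D n).Additive] [Pretriangulated D]

lemma aux_isZero_shift (X : C) (n : ℤ) : IsZero (X⟦n⟧) ↔ IsZero X := by
  rw [IsZero.iff_id_eq_zero, IsZero.iff_id_eq_zero, ← CategoryTheory.Functor.map_id, CategoryTheory.Functor.map_eq_zero_iff]

lemma aux_isZero_obj_shift (F : C ⥤ D) [F.CommShift ℤ] (X : C) (n : ℤ) :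
    IsZero (F.obj (X⟦n⟧)) ↔ IsZero (F.obj X) := by
  rw [← aux_isZero_shift (F.obj X) n]
  exact ((F.commShiftIso n).app X).isZero_iff

lemma aux_trunc (t : TStructure C) (X : C) (n : ℤ) (hX : t.IsLE X n) :
    ∃ (Y Z : C) (f : Y ⟶ X) (g : X ⟶ Z) (h : Z ⟶ Y⟦(1 : ℤ)⟧),
      (Triangle.mk f g h ∈ distTriang C) ∧ t.IsLE Y (n - 1) ∧ t.IsGE Z n ∧ t.IsLE Z n ∧
      (∀ a : ℤ, a ≤ n → t.IsGE X a → t.IsGE Y a) := by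
  obtain ⟨Y, Z, hY, hZ, f, g, h, mem⟩ := t.exists_triangle X (n - 1) n (by omega)
  have hY : t.IsLE Y (n - 1) := ⟨hY⟩
  have hZ : t.IsGE Z n := ⟨hZ⟩
  have hY1 : t.IsLE (Y⟦(1 : ℤ)⟧) (n - 2) := t.isLE_shift Y (n - 1) 1 (n - 2)
  refine ⟨Y, Z, f, g, h, mem, hY, hZ, ?_, ?_⟩
  · exact t.isLE₂ _ (rot_of_distTriang _ mem) n hX (t.isLE_of_le (Y⟦(1 : ℤ)⟧) (n - 2) n)
  · intro a ha hXa
    have hZ1 : t.IsGE (Z⟦(-1 : ℤ)⟧) (n + 1) := t.isGE_shift Z n (-1) (n + 1)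
    exact t.isGE₂ _ (inv_rot_of_distTriang _ mem) a
      (t.isGE_of_ge (Z⟦(-1 : ℤ)⟧) a (n + 1)) hXa

lemma aux_heart_shift (t : TStructure C) (X : C) (n : ℤ) (h₁ : t.IsLE X n) (h₂ : t.IsGE X n) :
    heartP t (X⟦n⟧) :=
  ⟨t.le_shift n n 0 (by omega) X h₁.le, t.ge_shift n n 0 (by omega) X h₂.ge⟩

/-- A triangulated functor that kills the heart kills every bounded object. -/
lemma aux_devissage_s15 (t : TStructure C) (F : C ⥤ D) [F.CommShift ℤ] [F.IsTriangulated]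
    (hF : ∀ M : C, heartP t M → IsZero (F.obj M)) (a : ℤ) (k : ℕ) :
    ∀ M : C, t.IsLE M (a + k - 1) → t.IsGE M a → IsZero (F.obj M) := by
  induction k with
  | zero =>
    intro M h₁ h₂
    exact F.map_isZero (t.isZero M (a + (0 : ℕ) - 1) a (by simp))
  | succ k ih =>
    intro M h₁ h₂
    obtain ⟨Y, Z, f, g, h, mem, hY, hZ, hZ', hYa⟩ := aux_trunc t M _ h₁
    have e : a + ((k + 1 : ℕ) : ℤ) - 1 - 1 = a + k - 1 := by push_cast; ring
    rw [e] at hY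
    refine Triangle.isZero₂_of_isZero₁₃ _ (F.map_distinguished _ mem) ?_ ?_
    · exact ih Y hY (hYa a (by push_cast; omega) h₂)
    · exact (aux_isZero_obj_shift F Z _).1 (hF _ (aux_heart_shift t Z _ hZ' hZ))

/-- A nonzero bounded object has a top cohomology. -/
lemma aux_top (t : TStructure C) (ht : tBounded t) (X : C) (hX : ¬ IsZero X) :
    ∃ n : ℤ, t.IsLE X n ∧ ¬ t.IsLE X (n - 1) := by
  obtain ⟨b, hb⟩ := ht.1 X
  obtain ⟨a, ha⟩ := ht.2 X
  have ha : t.IsGE X a := ⟨ha⟩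
  obtain ⟨n, hn, hmin⟩ := Int.exists_least_of_bdd (P := fun n => t.IsLE X n)
    ⟨a, fun z hz => by
      by_contra hlt
      exact hX (t.isZero X z a (by omega))⟩ ⟨b, ⟨hb⟩⟩
  exact ⟨n, hn, fun h => by have := hmin _ h; omega⟩

end Helpers

end DerivedModule

/-- `K` is a faithful `T`-module category iff the heart `H_{t'}` is
a faithful `H_t`-module category. -/
theorem faithful_iff_heart_faithful
    (T : Type*) [Category T] [HasZeroObject T] [Preadditive T] [HasShift T ℤ]
    [∀ n : ℤ, (shiftFunctor T n).Additive] [Pretriangulated T]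
    [MonoidalCategory T] [MonoidalTriangulated T]
    (K : Type*) [Category K] [HasZeroObject K] [Preadditive K] [HasShift K ℤ]
    [∀ n : ℤ, (shiftFunctor K n).Additive] [Pretriangulated K]
    (tm : TriangulatedModuleStruct T K)
    (t : TStructure T) (ht : IsMonoidalTStructure t) (ht0 : (0 : ℤ) ∈ monDev t)
    (t' : TStructure K) (ht' : IsModuleTStructure tm.act t t')
    (ht'0 : (0 : ℤ) ∈ modDev tm.act t t') :
    (∀ X : T, ¬ Limits.IsZero X →
        ∃ M : K, ¬ Limits.IsZero ((tm.act.obj X).obj M)) ↔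
      (∀ X : T, heartP t X → ¬ Limits.IsZero X →
        ∃ M : K, heartP t' M ∧ ¬ Limits.IsZero ((tm.act.obj X).obj M)) := by
  constructor
  · intro H X hX hX0
    by_contra hcon
    push Not at hcon
    obtain ⟨M, hM⟩ := H X hX0
    letI := tm.commShift_obj X
    haveI := tm.triangulated_obj X
    obtain ⟨b, hb⟩ := ht'.1.1 M
    obtain ⟨a, ha⟩ := ht'.1.2 M
    have hb : t'.IsLE M b := ⟨hb⟩
    refine hM (aux_devissage_s15 t' (tm.act.obj X) hcon a (b - a + 1).toNat M ?_ ⟨ha⟩)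
    exact t'.isLE_of_le M b _ (by have := Int.self_le_toNat (b - a + 1); omega)
  · intro H X hX0
    obtain ⟨n, hn, hn'⟩ := aux_top t ht.1 X hX0
    obtain ⟨Y, Z, f, g, h, mem, hY, hZ, hZ', -⟩ := aux_trunc t X n hn
    have hheart := aux_heart_shift t Z n hZ' hZ
    have hZ0 : ¬ IsZero (Z⟦n⟧) := by
      rw [aux_isZero_shift]
      intro hz
      have : IsIso f := (Triangle.isZero₃_iff_isIso₁ _ mem).1 hz
      exact hn' (t.isLE_of_iso (asIso f) (n - 1))
    obtain ⟨M, hM, hne⟩ := H _ hheart hZ0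
    refine ⟨M, fun hXM => hne ?_⟩
    letI := tm.commShift_flip M
    haveI := tm.triangulated_flip M
    let F := tm.act.flip.obj M
    have memF := F.map_distinguished _ mem
    have hFY : t'.IsLE (F.obj Y) (n - 1) := by
      have h1 : t'.IsLE (F.obj (Y⟦n - 1⟧)) 0 :=
        ⟨ht'0.1 _ M (t.le_shift (n - 1) (n - 1) 0 (by omega) Y hY.le) hM.1⟩
      have h2 : t'.IsLE ((F.obj Y)⟦n - 1⟧) 0 :=
        ⟨(t'.le 0).prop_of_iso ((F.commShiftIso (n - 1)).app Y) h1.le⟩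
      exact t'.isLE_of_shift (F.obj Y) (n - 1) (n - 1) 0
    have hFZ : t'.IsGE (F.obj Z) n := by
      have h1 : t'.IsGE (F.obj (Z⟦n⟧)) 0 := ⟨ht'0.2 _ M hheart.2 hM.2⟩
      have h2 : t'.IsGE ((F.obj Z)⟦n⟧) 0 := ⟨(t'.ge 0).prop_of_iso ((F.commShiftIso n).app Z) h1.ge⟩
      exact t'.isGE_of_shift (F.obj Z) n n 0
    have hFX : t'.IsLE (F.obj X) (n - 1) :=
      ⟨(t'.le (n - 1)).prop_of_iso (hXM.isoZero.symm) (by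
        simp only [TStructure.le_iff_isLE]; infer_instance)⟩
    have hFY1 : t'.IsLE ((F.obj Y)⟦(1 : ℤ)⟧) (n - 2) := t'.isLE_shift (F.obj Y) (n - 1) 1 (n - 2)
    have hFZ' : t'.IsLE (F.obj Z) (n - 1) :=
      t'.isLE₂ _ (rot_of_distTriang _ memF) (n - 1) hFX
        (t'.isLE_of_le ((F.obj Y)⟦(1 : ℤ)⟧) (n - 2) (n - 1))
    exact (aux_isZero_obj_shift F Z n).2 (t'.isZero (F.obj Z) (n - 1) n)
end

section
/- Let F: K₁ → K₂ be a full and dense triangulated functor between triangulated categories, and let t = (K₁^{≤0}, K₁^{≥0}) be a t-structure on K₁. Define full subcategories of K₂: U := {X ∈ K₂ | there exists X′ ∈ K₁^{≤0} with F(X′) ≅ X} and V := {Y ∈ K₂ | there exists Y′ ∈ K₁^{≥0} with F(Y′) ≅ Y}. Then (U, V) is a t-structure on K₂. Moreover, if t is bounded, then (U, V) is bounded. -/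
/-!
STATEMENT 17: Let `F : K₁ → K₂` be a full and dense (essentially surjective)
triangulated functor between triangulated categories and `t` a t-structure on `K₁`.
Define `U := {X ∈ K₂ | ∃ X' ∈ K₁^{≤0}, F(X') ≅ X}` and
`V := {Y ∈ K₂ | ∃ Y' ∈ K₁^{≥0}, F(Y') ≅ Y}`. Then `(U, V)` is a t-structure on `K₂`;
moreover if `t` is bounded then so is `(U, V)`.

The induced t-structure is encoded as a `TStructure` on `K₂` whose `≤ n` and `≥ n`
parts are the essential images of `K₁^{≤n}` and `K₁^{≥n}` under `F` (which for
`n = 0` are exactly `U` and `V`).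
-/

open CategoryTheory Category Limits Pretriangulated MonoidalCategory ZeroObject
open CategoryTheory.Triangulated

open DerivedModule

/-- A full and dense triangulated functor transports a t-structure;
boundedness is preserved. -/
theorem tStructure_of_full_dense_triangulated_functor
    (K₁ : Type*) [Category K₁] [HasZeroObject K₁] [Preadditive K₁] [HasShift K₁ ℤ]
    [∀ n : ℤ, (shiftFunctor K₁ n).Additive] [Pretriangulated K₁]
    (K₂ : Type*) [Category K₂] [HasZeroObject K₂] [Preadditive K₂] [HasShift K₂ ℤ]
    [∀ n : ℤ, (shiftFunctor K₂ n).Additive] [Pretriangulated K₂]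
    (F : K₁ ⥤ K₂) [F.CommShift ℤ] [F.IsTriangulated] [F.Full] [F.EssSurj]
    (t : TStructure K₁) :
    ∃ t₂ : TStructure K₂,
      (∀ (n : ℤ) (X : K₂), t₂.le n X ↔
        ∃ X' : K₁, t.le n X' ∧ Nonempty (F.obj X' ≅ X)) ∧
      (∀ (n : ℤ) (Y : K₂), t₂.ge n Y ↔
        ∃ Y' : K₁, t.ge n Y' ∧ Nonempty (F.obj Y' ≅ Y)) ∧
      (tBounded t → tBounded t₂) := by
  refine ⟨{
    le := fun n X => ∃ X' : K₁, t.le n X' ∧ Nonempty (F.obj X' ≅ X)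
    ge := fun n X => ∃ X' : K₁, t.ge n X' ∧ Nonempty (F.obj X' ≅ X)
    le_isClosedUnderIsomorphisms := fun n =>
      ⟨fun e ⟨X', h, ⟨i⟩⟩ => ⟨X', h, ⟨i ≪≫ e⟩⟩⟩
    ge_isClosedUnderIsomorphisms := fun n =>
      ⟨fun e ⟨X', h, ⟨i⟩⟩ => ⟨X', h, ⟨i ≪≫ e⟩⟩⟩
    le_shift := fun n a n' h X ⟨X', hX, ⟨i⟩⟩ =>
      ⟨X'⟦a⟧, t.le_shift n a n' h X' hX,
        ⟨(F.commShiftIso a).app X' ≪≫ (shiftFunctor K₂ a).mapIso i⟩⟩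
    ge_shift := fun n a n' h X ⟨X', hX, ⟨i⟩⟩ =>
      ⟨X'⟦a⟧, t.ge_shift n a n' h X' hX,
        ⟨(F.commShiftIso a).app X' ≪≫ (shiftFunctor K₂ a).mapIso i⟩⟩
    zero' := ?_
    le_zero_le := fun X ⟨X', h, i⟩ => ⟨X', t.le_zero_le _ h, i⟩
    ge_one_le := fun X ⟨X', h, i⟩ => ⟨X', t.ge_one_le _ h, i⟩
    exists_triangle_zero_one := ?_ }, fun _ _ => Iff.rfl, fun _ _ => Iff.rfl, ?_⟩
  · rintro X Y f ⟨X', hX, ⟨i⟩⟩ ⟨Y', hY, ⟨j⟩⟩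
    obtain ⟨g, hg⟩ := F.map_surjective (i.hom ≫ f ≫ j.inv)
    have h0 : g = 0 := t.zero' g hX hY
    rw [h0, F.map_zero] at hg
    have : f = i.inv ≫ (i.hom ≫ f ≫ j.inv) ≫ j.hom := by simp
    rw [this, ← hg]
    simp
  · intro A
    obtain ⟨X, Y, hX, hY, f, g, h, mem⟩ := t.exists_triangle_zero_one (F.objPreimage A)
    let e := F.objObjPreimageIso A
    refine ⟨F.obj X, F.obj Y, ⟨X, hX, ⟨Iso.refl _⟩⟩, ⟨Y, hY, ⟨Iso.refl _⟩⟩,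
      F.map f ≫ e.hom, e.inv ≫ F.map g, F.map h ≫ (F.commShiftIso (1 : ℤ)).hom.app X, ?_⟩
    refine isomorphic_distinguished _ (F.map_distinguished _ mem) _ ?_
    refine Triangle.isoMk _ _ (Iso.refl _) e.symm (Iso.refl _) ?_ ?_ ?_
    · change (F.map f ≫ e.hom) ≫ e.inv = 𝟙 (F.obj X) ≫ F.map f
      simp
    · change (e.inv ≫ F.map g) ≫ 𝟙 (F.obj Y) = e.inv ≫ F.map g
      simp
    · change (F.map h ≫ (F.commShiftIso (1 : ℤ)).hom.app X) ≫
        (shiftFunctor K₂ (1 : ℤ)).map (𝟙 (F.obj X)) =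
        𝟙 (F.obj Y) ≫ F.map h ≫ (F.commShiftIso (1 : ℤ)).hom.app X
      rw [CategoryTheory.Functor.map_id, Category.id_comp]
      exact Category.comp_id _
  · rintro ⟨h₁, h₂⟩
    refine ⟨fun X => ?_, fun X => ?_⟩
    · obtain ⟨n, hn⟩ := h₁ (F.objPreimage X)
      exact ⟨n, _, hn, ⟨F.objObjPreimageIso X⟩⟩
    · obtain ⟨n, hn⟩ := h₂ (F.objPreimage X)
      exact ⟨n, _, hn, ⟨F.objObjPreimageIso X⟩⟩
end
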